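/- arXiv:2601.05883 — 9 statements merged into one kernel-verified Lean document; each statement's English description precedes it below -/
import Mathlib

section
/- There exist absolute constants c₁, c₂ ∈ (0,1), C₁, C₂ > 0 and a natural number N₀ such that the following holds. For every natural number n ≥ N₀, all reals ε ∈ (0, 1/10] and φ ∈ (0,1] satisfying (ε/φ²)·log(1/ε) ≤ c₁ and log(1/ε)·log(φ²/ε) ≤ c₂·log n, and every integer t ≥ 20·(log n)/φ², there exists a real polynomial q with deg q ≤ C₁·(ε·t + log(φ²/ε)) such that the polynomial p(X) := X^t · q(X) satisfies: (i) every coefficient of p (in the standard monomial basis) has absolute value at most (1/ε)^{C₂·(ε·t + log(φ²/ε))}; (ii) |p(x) − 1| ≤ ε/φ² for every real x ∈ [1−ε, 1]; and (iii) |p(x)| ≤ n^{−4} for every real x ∈ [0, 1 − φ²/4]. -/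
open Polynomial

/-! Take for `q` the Taylor polynomial of `x ↦ x⁻ᵗ` at `1`, of degree `d ≈ 4 (ε t + log (φ² / ε))`.
It is a partial sum of the series `∑ₖ multichoose t k · (1 - x)ᵏ`, whose coefficients are
nonnegative, so each claim follows by comparing that sum with the full series at another radius
(Rankin's trick). For `1 - x ≤ ε`, the radius `e (1 - x)` shows that the omitted tail is small.
Away from `1`, the radius `(1 - x) / e²` bounds the partial sum by `e²ᵈ` times a convergent series,
and the factor `xᵗ` beats both. The coefficients of `q` are at most the same partial sum with
`1 - x` replaced by `2`, which is compared with the radius `ε`. -/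

section NonnegativeSeries

variable {a : ℕ → ℝ} {r v s A B : ℝ}

lemma sum_range_succ_mul_pow_le_of_hasSum (ha : ∀ k, 0 ≤ a k) (hr : 0 < r) (hrv : r ≤ v)
    (hA : HasSum (fun k ↦ a k * r ^ k) A) (d : ℕ) :
    ∑ k ∈ Finset.range (d + 1), a k * v ^ k ≤ (v / r) ^ d * A := by
  have hvr : 1 ≤ v / r := (one_le_div hr).2 hrv
  calc ∑ k ∈ Finset.range (d + 1), a k * v ^ k
      ≤ ∑ k ∈ Finset.range (d + 1), (v / r) ^ d * (a k * r ^ k) := by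
        refine Finset.sum_le_sum fun k hk ↦ ?_
        have hkd : k ≤ d := Finset.mem_range_succ_iff.1 hk
        calc a k * v ^ k = (v / r) ^ k * (a k * r ^ k) := by rw [div_pow]; field_simp
          _ ≤ (v / r) ^ d * (a k * r ^ k) :=
            mul_le_mul_of_nonneg_right (pow_le_pow_right₀ hvr hkd)
              (mul_nonneg (ha k) (pow_nonneg hr.le k))
    _ = (v / r) ^ d * ∑ k ∈ Finset.range (d + 1), a k * r ^ k := (Finset.mul_sum ..).symm
    _ ≤ (v / r) ^ d * A :=
        mul_le_mul_of_nonneg_left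
          (sum_le_hasSum _ (fun k _ ↦ mul_nonneg (ha k) (pow_nonneg hr.le k)) hA)
          (by positivity)

lemma sub_sum_range_mul_pow_le_of_hasSum (ha : ∀ k, 0 ≤ a k) (hr : 0 ≤ r) (hs : 1 ≤ s)
    (hA : HasSum (fun k ↦ a k * r ^ k) A) (hB : HasSum (fun k ↦ a k * (s * r) ^ k) B) (d : ℕ) :
    A - ∑ k ∈ Finset.range d, a k * r ^ k ≤ B / s ^ d := by
  have : 0 < s := zero_lt_one.trans_le hs
  have hb : ∀ k, 0 ≤ a k * (s * r) ^ k := fun k ↦ mul_nonneg (ha k) (by positivity)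
  have tail_le : A - ∑ k ∈ Finset.range d, a k * r ^ k
      ≤ (B - ∑ k ∈ Finset.range d, a k * (s * r) ^ k) / s ^ d := by
    refine hasSum_le (fun k ↦ ?_) ((hasSum_nat_add_iff' d).2 hA)
      (((hasSum_nat_add_iff' d).2 hB).div_const (s ^ d))
    rw [le_div_iff₀ (by positivity), mul_pow, mul_left_comm, mul_comm]
    exact mul_le_mul_of_nonneg_right (pow_le_pow_right₀ hs (Nat.le_add_left d k))
      (mul_nonneg (ha _) (pow_nonneg hr _))
  refine tail_le.trans (div_le_div_of_nonneg_right ?_ (by positivity))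
  exact sub_le_self _ (Finset.sum_nonneg fun k _ ↦ hb k)

end NonnegativeSeries

lemma hasSum_multichoose_mul_geometric_of_norm_lt_one {𝕜 : Type*} [NormedDivisionRing 𝕜]
    [CompleteSpace 𝕜] (t : ℕ) {x : 𝕜} (hx : ‖x‖ < 1) :
    HasSum (fun k ↦ (t.multichoose k : 𝕜) * x ^ k) ((1 - x) ^ t)⁻¹ := by
  cases t with
  | zero =>
    convert! hasSum_single (f := fun k ↦ ((0 : ℕ).multichoose k : 𝕜) * x ^ k) 0 ?_ using 1
    · simp
    · rintro (_ | k) hk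
      · exact absurd rfl hk
      · simp
  | succ m =>
    convert! hasSum_choose_mul_geometric_of_norm_lt_one m hx using 2 with k
    · rw [Nat.multichoose_eq, show m + 1 + k - 1 = k + m by omega, Nat.choose_symm_add]
    · exact (one_div _).symm

lemma inv_one_sub_pow_le_exp {y : ℝ} (hy : y < 1) (t : ℕ) :
    ((1 - y) ^ t)⁻¹ ≤ Real.exp (t * (y / (1 - y))) := by
  have hy₀ : 0 < 1 - y := sub_pos.2 hy
  rw [Real.exp_nat_mul, ← inv_pow]
  refine pow_le_pow_left₀ (by positivity) ?_ t
  calc (1 - y)⁻¹ = y / (1 - y) + 1 := by field_simp; ring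
    _ ≤ Real.exp (y / (1 - y)) := Real.add_one_le_exp _

/-- The Taylor polynomial of degree `d` at `1` of the function `x ↦ x⁻ᵗ`. -/
noncomputable def invPowTaylor (R : Type*) [CommRing R] (t d : ℕ) : R[X] :=
  ∑ k ∈ Finset.range (d + 1), C (t.multichoose k : R) * (1 - X) ^ k

section CommRing

variable {R : Type*} [CommRing R]

lemma natDegree_one_sub_X_pow_le (k : ℕ) : ((1 - X : R[X]) ^ k).natDegree ≤ k :=
  natDegree_pow_le_of_le k (m := 1) (by compute_degree) |>.trans_eq (mul_one k)

lemma natDegree_invPowTaylor_le (t d : ℕ) : (invPowTaylor R t d).natDegree ≤ d :=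
  natDegree_sum_le_of_forall_le _ _ fun k hk ↦
    (natDegree_C_mul_le _ _).trans <|
      (natDegree_one_sub_X_pow_le k).trans (Finset.mem_range_succ_iff.1 hk)

lemma eval_invPowTaylor (t d : ℕ) (x : R) :
    (invPowTaylor R t d).eval x
      = ∑ k ∈ Finset.range (d + 1), (t.multichoose k : R) * (1 - x) ^ k := by
  simp [invPowTaylor, eval_finsetSum]

variable [LinearOrder R] [IsStrictOrderedRing R]

lemma abs_coeff_one_sub_X_pow_le (k i : ℕ) : |((1 - X : R[X]) ^ k).coeff i| ≤ 2 ^ k := by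
  induction k generalizing i with
  | zero => rw [pow_zero, coeff_one]; split_ifs <;> simp
  | succ k ih =>
    have shifted_le : |((1 - X : R[X]) ^ k * X).coeff i| ≤ 2 ^ k := by
      cases i with
      | zero => simp
      | succ i => simpa only [coeff_mul_X] using ih i
    calc |((1 - X : R[X]) ^ (k + 1)).coeff i|
        = |((1 - X : R[X]) ^ k).coeff i - ((1 - X : R[X]) ^ k * X).coeff i| := by
          rw [pow_succ, mul_sub, mul_one, coeff_sub]
      _ ≤ 2 ^ k + 2 ^ k := (abs_sub _ _).trans (add_le_add (ih i) shifted_le)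
      _ = 2 ^ (k + 1) := by ring

lemma abs_coeff_invPowTaylor_le (t d i : ℕ) :
    |(invPowTaylor R t d).coeff i|
      ≤ ∑ k ∈ Finset.range (d + 1), (t.multichoose k : R) * 2 ^ k := by
  rw [invPowTaylor, finsetSum_coeff]
  refine (Finset.abs_sum_le_sum_abs _ _).trans (Finset.sum_le_sum fun k _ ↦ ?_)
  rw [coeff_C_mul, abs_mul, Nat.abs_cast]
  exact mul_le_mul_of_nonneg_left (abs_coeff_one_sub_X_pow_le k i) (Nat.cast_nonneg _)

lemma abs_coeff_X_pow_mul_le {p : R[X]} {M : R} (hp : ∀ i, |p.coeff i| ≤ M) (t i : ℕ) :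
    |(X ^ t * p).coeff i| ≤ M := by
  rw [coeff_X_pow_mul']
  split_ifs
  · exact hp _
  · simpa using (abs_nonneg _).trans (hp 0)

end CommRing

section RadiusComparison

variable (t d : ℕ) {x : ℝ}

lemma hasSum_multichoose_mul_pow {r : ℝ} (hr₀ : 0 ≤ r) (hr₁ : r < 1) :
    HasSum (fun k ↦ (t.multichoose k : ℝ) * r ^ k) ((1 - r) ^ t)⁻¹ :=
  hasSum_multichoose_mul_geometric_of_norm_lt_one t (by rwa [Real.norm_of_nonneg hr₀])

lemma abs_coeff_X_pow_mul_invPowTaylor_le {r : ℝ} (hr₀ : 0 < r) (hr₁ : r < 1) (i : ℕ) :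
    |(X ^ t * invPowTaylor ℝ t d).coeff i| ≤ (2 / r) ^ d * ((1 - r) ^ t)⁻¹ :=
  abs_coeff_X_pow_mul_le (fun j ↦ (abs_coeff_invPowTaylor_le t d j).trans <|
    sum_range_succ_mul_pow_le_of_hasSum (fun _ ↦ Nat.cast_nonneg _) hr₀ (by linarith)
      (hasSum_multichoose_mul_pow t hr₀.le hr₁) d) t i

lemma abs_eval_X_pow_mul_invPowTaylor_sub_one_le {s : ℝ} (hs : 1 ≤ s) (hx : x ≤ 1)
    (hsx : s * (1 - x) < 1) :
    |(X ^ t * invPowTaylor ℝ t d).eval x - 1| ≤ ((1 - s * (1 - x)) ^ t)⁻¹ / s ^ (d + 1) := by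
  have hu : 0 ≤ 1 - x := sub_nonneg.2 hx
  have hx₀ : 0 < x := by nlinarith
  have hA := hasSum_multichoose_mul_pow t hu (by linarith)
  rw [sub_sub_cancel] at hA
  set S := ∑ k ∈ Finset.range (d + 1), (t.multichoose k : ℝ) * (1 - x) ^ k with hS
  have partial_le : S ≤ (x ^ t)⁻¹ := sum_le_hasSum _ (fun k _ ↦ by positivity) hA
  have tail_le : (x ^ t)⁻¹ - S ≤ ((1 - s * (1 - x)) ^ t)⁻¹ / s ^ (d + 1) :=
    sub_sum_range_mul_pow_le_of_hasSum (fun _ ↦ Nat.cast_nonneg _) hu hs hA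
      (hasSum_multichoose_mul_pow t (by positivity) hsx) (d + 1)
  have eval_sub_one : (X ^ t * invPowTaylor ℝ t d).eval x - 1 = -(x ^ t * ((x ^ t)⁻¹ - S)) := by
    rw [eval_mul, eval_pow, eval_X, eval_invPowTaylor, ← hS, mul_sub,
      mul_inv_cancel₀ (by positivity), neg_sub]
  rw [eval_sub_one, abs_neg, abs_of_nonneg (mul_nonneg (by positivity) (sub_nonneg.2 partial_le))]
  exact (mul_le_of_le_one_left (sub_nonneg.2 partial_le) (pow_le_one₀ hx₀.le hx)).trans tail_le

lemma abs_eval_X_pow_mul_invPowTaylor_le {r : ℝ} (hr₀ : 0 < r) (hr₁ : r < 1) (hx : 0 ≤ x)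
    (hrx : r ≤ 1 - x) :
    |(X ^ t * invPowTaylor ℝ t d).eval x| ≤ ((1 - x) / r) ^ d * (x / (1 - r)) ^ t := by
  have hu : 0 ≤ 1 - x := hr₀.le.trans hrx
  rw [eval_mul, eval_pow, eval_X, eval_invPowTaylor, abs_of_nonneg (by positivity), div_pow x,
    div_eq_mul_inv (x ^ t), mul_left_comm]
  exact mul_le_mul_of_nonneg_left
    (sum_range_succ_mul_pow_le_of_hasSum (fun _ ↦ Nat.cast_nonneg _) hr₀ hrx
      (hasSum_multichoose_mul_pow t hr₀.le hr₁) d) (by positivity)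

lemma abs_eval_X_pow_mul_invPowTaylor_le_exp {a : ℝ} (ha : 0 < a) (hx₀ : 0 ≤ x) (hx₁ : x < 1) :
    |(X ^ t * invPowTaylor ℝ t d).eval x|
      ≤ Real.exp (a * d - (1 - Real.exp (-a)) * (1 - x) * t) := by
  have hu : 0 < 1 - x := sub_pos.2 hx₁
  have hb : Real.exp (-a) < 1 := Real.exp_lt_one_iff.2 (neg_lt_zero.2 ha)
  set r := Real.exp (-a) * (1 - x) with hr
  have hr₀ : 0 < r := by positivity
  have hrx : r < 1 - x := mul_lt_of_lt_one_left hu hb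
  have ratio_eq : (1 - x) / r = Real.exp a := by
    rw [hr, Real.exp_neg]; field_simp
  have base_le : x / (1 - r) ≤ Real.exp (-((1 - Real.exp (-a)) * (1 - x))) := by
    refine le_trans ?_ (Real.add_one_le_exp _)
    rw [div_le_iff₀ (by linarith)]
    nlinarith [mul_nonneg hr₀.le (sub_nonneg.2 hrx.le)]
  calc |(X ^ t * invPowTaylor ℝ t d).eval x|
      ≤ ((1 - x) / r) ^ d * (x / (1 - r)) ^ t :=
        abs_eval_X_pow_mul_invPowTaylor_le t d hr₀ (by linarith) hx₀ hrx.le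
    _ ≤ Real.exp a ^ d * Real.exp (-((1 - Real.exp (-a)) * (1 - x))) ^ t := by
        rw [ratio_eq]
        have : 0 ≤ x / (1 - r) := div_nonneg hx₀ (by linarith)
        gcongr
    _ = Real.exp (a * d - (1 - Real.exp (-a)) * (1 - x) * t) := by
        rw [← Real.exp_nat_mul, ← Real.exp_nat_mul, ← Real.exp_add]
        ring_nf

end RadiusComparison

section ExplicitRadii

variable (t d : ℕ) {ε x : ℝ}

lemma exp_one_le_one_div (hε : ε ∈ Set.Ioc 0 (1 / 10)) : Real.exp 1 ≤ 1 / ε := by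
  rw [le_div_iff₀ hε.1]
  nlinarith [hε.1, hε.2, Real.exp_one_lt_d9]

lemma abs_coeff_X_pow_mul_invPowTaylor_le_rpow (hε : ε ∈ Set.Ioc 0 (1 / 10)) (i : ℕ) :
    |(X ^ t * invPowTaylor ℝ t d).coeff i| ≤ (1 / ε) ^ (2 * d + 2 * ε * t) := by
  obtain ⟨hε₀, hε₁⟩ := hε
  have hε_inv : 0 < 1 / ε := by positivity
  have partial_le : (2 / ε) ^ d ≤ (1 / ε) ^ (2 * d : ℝ) := by
    rw [Real.rpow_mul hε_inv.le, Real.rpow_natCast, Real.rpow_two]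
    refine pow_le_pow_left₀ (by positivity) ?_ d
    rw [div_pow, div_le_div_iff₀ hε₀ (by positivity)]
    nlinarith
  have series_le : ((1 - ε) ^ t)⁻¹ ≤ (1 / ε) ^ (2 * ε * t) := by
    calc ((1 - ε) ^ t)⁻¹ ≤ Real.exp (t * (ε / (1 - ε))) := inv_one_sub_pow_le_exp (by linarith) t
      _ ≤ Real.exp (t * (2 * ε)) := by
          gcongr
          rw [div_le_iff₀ (by linarith)]
          nlinarith
      _ = Real.exp 1 ^ (2 * ε * t) := by rw [Real.exp_one_rpow, mul_comm]
      _ ≤ (1 / ε) ^ (2 * ε * t) :=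
          Real.rpow_le_rpow (Real.exp_pos 1).le (exp_one_le_one_div ⟨hε₀, hε₁⟩) (by positivity)
  calc |(X ^ t * invPowTaylor ℝ t d).coeff i|
      ≤ (2 / ε) ^ d * ((1 - ε) ^ t)⁻¹ :=
        abs_coeff_X_pow_mul_invPowTaylor_le t d hε₀ (by linarith) i
    _ ≤ (1 / ε) ^ (2 * d : ℝ) * (1 / ε) ^ (2 * ε * t) :=
        mul_le_mul partial_le series_le
          (inv_nonneg.2 (pow_nonneg (by linarith) t)) (by positivity)
    _ = (1 / ε) ^ (2 * d + 2 * ε * t) := (Real.rpow_add hε_inv _ _).symm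

lemma abs_eval_X_pow_mul_invPowTaylor_sub_one_le_exp (hε : ε ≤ 1 / 10)
    (hx : x ∈ Set.Icc (1 - ε) 1) :
    |(X ^ t * invPowTaylor ℝ t d).eval x - 1| ≤ Real.exp (4 * ε * t - (d + 1)) := by
  obtain ⟨hxε, hx₁⟩ := hx
  have he : Real.exp 1 < 2.72 := Real.exp_one_lt_d9.trans (by norm_num)
  have radius_le : Real.exp 1 * (1 - x) ≤ 2.72 * ε := by
    nlinarith [Real.exp_pos 1]
  calc |(X ^ t * invPowTaylor ℝ t d).eval x - 1|
      ≤ ((1 - Real.exp 1 * (1 - x)) ^ t)⁻¹ / Real.exp 1 ^ (d + 1) :=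
        abs_eval_X_pow_mul_invPowTaylor_sub_one_le t d (Real.one_le_exp zero_le_one) hx₁
          (by linarith)
    _ ≤ Real.exp (t * (4 * ε)) / Real.exp 1 ^ (d + 1) := by
        gcongr
        refine (inv_one_sub_pow_le_exp (by linarith) t).trans ?_
        gcongr
        rw [div_le_iff₀ (by linarith)]
        nlinarith
    _ = Real.exp (4 * ε * t - (d + 1)) := by
        rw [← Real.exp_nat_mul, ← Real.exp_sub]
        push_cast
        ring_nf

lemma abs_eval_X_pow_mul_invPowTaylor_le_exp_two_mul_sub (hx₀ : 0 ≤ x) (hx₁ : x < 1) :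
    |(X ^ t * invPowTaylor ℝ t d).eval x| ≤ Real.exp (2 * d - 6 / 7 * (1 - x) * t) := by
  have exp_neg_two_le : Real.exp (-2) ≤ 1 / 7 := by
    rw [Real.exp_neg, ← one_div, show (2 : ℝ) = 1 + 1 by norm_num, Real.exp_add]
    gcongr
    nlinarith [Real.exp_one_gt_d9]
  refine (abs_eval_X_pow_mul_invPowTaylor_le_exp t d two_pos hx₀ hx₁).trans ?_
  have : 0 ≤ 1 - x := by linarith
  gcongr
  linarith

end ExplicitRadii

theorem stmt_0_general {ν ε φ : ℝ} (hν : 0 < ν) (hε : ε ∈ Set.Ioc 0 (1 / 10)) (hφ : 0 < φ)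
    (hεφ : ε / φ ^ 2 ≤ 1 / 1000) (hL : Real.log (φ ^ 2 / ε) ≤ 1 / 1000 * Real.log ν)
    {t : ℕ} (ht : 20 * Real.log ν / φ ^ 2 ≤ t) :
    ∃ q : ℝ[X],
      q.natDegree ≤ 4 * (ε * t + Real.log (φ ^ 2 / ε)) ∧
      (∀ i, |(X ^ t * q).coeff i| ≤ (1 / ε) ^ (10 * (ε * t + Real.log (φ ^ 2 / ε)))) ∧
      (∀ x ∈ Set.Icc (1 - ε) 1, |(X ^ t * q).eval x - 1| ≤ ε / φ ^ 2) ∧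
      (∀ x ∈ Set.Icc 0 (1 - φ ^ 2 / 4), |(X ^ t * q).eval x| ≤ ν ^ (-4 : ℝ)) := by
  obtain ⟨hε₀, hε₁⟩ := hε
  have hφ₂ : 0 < φ ^ 2 := by positivity
  have exp_neg_log : Real.exp (-Real.log (φ ^ 2 / ε)) = ε / φ ^ 2 := by
    rw [Real.exp_neg, Real.exp_log (by positivity), inv_div]
  rw [div_le_iff₀ hφ₂] at hεφ ht
  have hL₀ : 0 ≤ Real.log (φ ^ 2 / ε) :=
    Real.log_nonneg ((one_le_div hε₀).2 (by linarith))
  set L := Real.log (φ ^ 2 / ε)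
  set d := ⌊4 * (ε * t + L)⌋₊
  have : 0 ≤ ε * t := by positivity
  have hd : d ≤ 4 * (ε * t + L) := Nat.floor_le (by positivity)
  have hd' : 4 * (ε * t + L) < d + 1 := Nat.lt_floor_add_one _
  refine ⟨invPowTaylor ℝ t d, ?_, fun i ↦ ?_, fun x hx ↦ ?_, fun x hx ↦ ?_⟩
  · exact (Nat.cast_le.2 (natDegree_invPowTaylor_le t d)).trans hd
  · refine (abs_coeff_X_pow_mul_invPowTaylor_le_rpow t d ⟨hε₀, hε₁⟩ i).trans ?_
    exact Real.rpow_le_rpow_of_exponent_le ((one_le_div hε₀).2 (by linarith)) (by linarith)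
  · refine (abs_eval_X_pow_mul_invPowTaylor_sub_one_le_exp t d hε₁ hx).trans ?_
    rw [← exp_neg_log]
    exact Real.exp_le_exp.2 (by linarith)
  · have hx₁ : x < 1 := by linarith [hx.2]
    refine (abs_eval_X_pow_mul_invPowTaylor_le_exp_two_mul_sub t d hx.1 hx₁).trans ?_
    rw [Real.rpow_def_of_pos hν, Real.exp_le_exp]
    have gap_mul_le : φ ^ 2 / 4 * t ≤ (1 - x) * t :=
      mul_le_mul_of_nonneg_right (by linarith [hx.2]) t.cast_nonneg
    have hεt_le : ε * t ≤ 1 / 1000 * φ ^ 2 * t :=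
      mul_le_mul_of_nonneg_right hεφ t.cast_nonneg
    linarith

/-- Existence of a polynomial `p = X^t * q` with small coefficients that is
close to `1` on `[1-ε, 1]` and close to `0` on `[0, 1-φ²/4]`. -/
theorem stmt_0 :
    ∃ c₁ ∈ Set.Ioo (0:ℝ) 1, ∃ c₂ ∈ Set.Ioo (0:ℝ) 1,
    ∃ C₁ : ℝ, 0 < C₁ ∧ ∃ C₂ : ℝ, 0 < C₂ ∧ ∃ N₀ : ℕ,
    ∀ n : ℕ, N₀ ≤ n →
    ∀ ε φ : ℝ, ε ∈ Set.Ioc (0:ℝ) (1/10) → φ ∈ Set.Ioc (0:ℝ) 1 →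
    ε / φ ^ 2 * Real.log (1/ε) ≤ c₁ →
    Real.log (1/ε) * Real.log (φ ^ 2 / ε) ≤ c₂ * Real.log n →
    ∀ t : ℕ, 20 * Real.log n / φ ^ 2 ≤ (t : ℝ) →
    ∃ q : Polynomial ℝ,
      (q.natDegree : ℝ) ≤ C₁ * (ε * t + Real.log (φ ^ 2 / ε)) ∧
      (∀ i : ℕ, |(X ^ t * q).coeff i| ≤ (1/ε) ^ (C₂ * (ε * t + Real.log (φ ^ 2 / ε)))) ∧
      (∀ x ∈ Set.Icc (1 - ε) 1, |(X ^ t * q).eval x - 1| ≤ ε / φ ^ 2) ∧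
      (∀ x ∈ Set.Icc (0:ℝ) (1 - φ ^ 2 / 4), |(X ^ t * q).eval x| ≤ (n : ℝ) ^ (-(4:ℝ))) := by
  refine ⟨1 / 1000, by norm_num, 1 / 1000, by norm_num, 4, by norm_num, 10, by norm_num, 1, ?_⟩
  intro n hn ε φ hε hφ hc₁ hc₂ t ht
  have hlog : 1 ≤ Real.log (1 / ε) :=
    (Real.le_log_iff_exp_le (one_div_pos.2 hε.1)).2 (exp_one_le_one_div hε)
  have hεφ : ε / φ ^ 2 ≤ 1 / 1000 :=
    (le_mul_of_one_le_right (div_nonneg hε.1.le (sq_nonneg φ)) hlog).trans hc₁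
  have hL₀ : 0 ≤ Real.log (φ ^ 2 / ε) := by
    rw [← inv_div, Real.log_inv]
    exact neg_nonneg.2 (Real.log_nonpos (div_nonneg hε.1.le (sq_nonneg φ)) (by linarith))
  exact stmt_0_general (Nat.cast_pos.2 hn) hε hφ.1 hεφ
    ((le_mul_of_one_le_left hL₀ hlog).trans hc₂) ht
end

section
/- There exist absolute constants C₁, C₂ > 0 such that for every integer t ≥ 2, every real ε ∈ (0, 1/10], and every integer d ≥ 10·ε·t, the truncated Chebyshev expansion P(x) := c_{0,ε,t}/2 + Σ_{v=1}^{d} c_{v,ε,t}·T_v(x) of (1 − ε·x)^{−t} satisfies: (i) max_{0 ≤ v ≤ d} c_{v,ε,t} ≤ 2^{C₁·(ε·t + 1)}; and (ii) sup_{x ∈ [−1,1]} |P(x) − (1 − ε·x)^{−t}| ≤ C₂·(d+1)·e^{−d}. -/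
/-- The Chebyshev coefficient `c_{v,ε,t}` of the expansion of `(1 - ε x)^{-t}`:
`c_{v,ε,t} = 2 ∑_{n ≥ v, n - v even} ε^n 2^{-n} C(n-1+t, n) C(n, (n-v)/2)`. -/
noncomputable def chebCoeff (ε : ℝ) (t v : ℕ) : ℝ :=
  2 * ∑' n : ℕ, if v ≤ n ∧ Even (n - v) then
      ε ^ n * (2:ℝ)⁻¹ ^ n * (Nat.choose (n - 1 + t) n) * (Nat.choose n ((n - v) / 2)) else 0

/-!
Since `2x = z + z⁻¹` for `x = (z + z⁻¹) / 2`, the power `(2x)ⁿ` is a combination of the `T_v(x)`,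
`v ∈ ℤ`, with weights counting `±1`-step walks. Hence a power series `f(x) = ∑ aₙ xⁿ` with `aₙ ≥ 0`
has nonnegative Chebyshev coefficients, and `f(x) = ½ ∑_{v ∈ ℤ} c_{|v|} T_v(x)`. Every bound comes
from evaluating this expansion at points where all its terms are nonnegative: at `x = 1` each
`c_v / 2` is at most `f(1)`, while at `x = cosh θ` we have
`T_v(cosh θ) = cosh (vθ) ≥ exp (|v|θ) / 2`, so that on `[-1, 1]`, where `|T_v| ≤ 1`, the terms with
`|v| > d` contribute at most `2 exp (-(d + 1)θ) f(cosh θ)`. For `f(x) = (1 - εx)⁻ᵗ` the choice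
`θ = log 4` suffices.
-/

section

open Polynomial Polynomial.Chebyshev

theorem two_mul_X_pow_mul_T (R : Type*) [CommRing R] (n : ℕ) (m : ℤ) :
    (2 * X) ^ n * T R m = ∑ k ∈ Finset.range (n + 1), n.choose k • T R (m + (n - 2 * k)) := by
  induction n generalizing m with
  | zero => simp
  | succ n ih =>
    have two_mul_X_mul_T : 2 * X * T R m = T R (m + 1) + T R (m - 1) := by
      rw [T_add_one, sub_add_cancel]
    simp only [nsmul_eq_mul] at ih ⊢
    rw [Finset.sum_choose_succ_mul (fun i _ ↦ T R (m + ((n + 1 : ℕ) - 2 * i))), pow_succ,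
      mul_assoc, two_mul_X_mul_T, mul_add, ih, ih]
    congr! 4 <;> push_cast <;> ring

/-- The number of `±1`-step walks on `ℤ` of length `n` from `0` to `v`. For `v` of either sign it
is used as `walkCount n v.natAbs`. -/
def walkCount (n v : ℕ) : ℕ :=
  if v ≤ n ∧ Even (n - v) then n.choose ((n - v) / 2) else 0

theorem walkCount_eq_zero_of_lt {n v : ℕ} (h : n < v) : walkCount n v = 0 :=
  if_neg fun hv ↦ h.not_ge hv.1

theorem walkCount_natAbs_sub_two_mul {n k : ℕ} (hk : k ≤ n) :
    walkCount n (n - 2 * k : ℤ).natAbs = n.choose k := by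
  rw [walkCount, if_pos ⟨by omega, by rw [Nat.even_iff]; omega⟩]
  rcases le_total (2 * k) n with h | h
  · congr 1
    omega
  · rw [← Nat.choose_symm hk]
    congr 1
    omega

theorem exists_eq_sub_two_mul_of_walkCount_ne_zero {n : ℕ} {v : ℤ}
    (hv : walkCount n v.natAbs ≠ 0) : ∃ k ≤ n, v = n - 2 * k := by
  obtain ⟨hle, j, hj⟩ : v.natAbs ≤ n ∧ Even (n - v.natAbs) := by
    by_contra h
    exact hv (if_neg h)
  exact ⟨((n - v) / 2).toNat, by omega, by omega⟩

theorem sum_walkCount_nsmul {M : Type*} [AddCommMonoid M] (n : ℕ) (w : ℤ → M) :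
    ∑ v ∈ Finset.Icc (-n : ℤ) n, walkCount n v.natAbs • w v =
      ∑ k ∈ Finset.range (n + 1), n.choose k • w (n - 2 * k) := by
  symm
  refine Finset.sum_of_injOn (fun k : ℕ ↦ (n - 2 * k : ℤ)) (fun _ _ _ _ h ↦ ?_) (fun k hk ↦ ?_)
    (fun v _ hv ↦ ?_) (fun k hk ↦ ?_)
  · simp only at h
    omega
  · simp only [Finset.coe_range, Set.mem_Iio, Finset.coe_Icc, Set.mem_Icc] at hk ⊢
    omega
  · by_contra hne
    obtain ⟨k, hk, rfl⟩ := exists_eq_sub_two_mul_of_walkCount_ne_zero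
      (left_ne_zero_of_smul hne)
    exact hv ⟨k, by simpa [Nat.lt_succ_iff] using hk, rfl⟩
  · rw [walkCount_natAbs_sub_two_mul (Finset.mem_range_succ_iff.mp hk)]

theorem two_mul_X_pow_eq_sum_walkCount_nsmul_T (R : Type*) [CommRing R] (n : ℕ) :
    (2 * X) ^ n = ∑ v ∈ Finset.Icc (-n : ℤ) n, walkCount n v.natAbs • T R v := by
  rw [sum_walkCount_nsmul]
  simpa using two_mul_X_pow_mul_T R n 0

theorem abs_eval_T_le_eval_T_of_abs_le (n : ℤ) {x y : ℝ} (hy : 1 ≤ y) (hxy : |x| ≤ y) :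
    |(T ℝ n).eval x| ≤ (T ℝ n).eval y := by
  rcases le_total |x| 1 with hx | hx
  · exact (abs_eval_T_real_le_one n hx).trans (one_le_eval_T_real n hy)
  · have abs_eval_neg (z : ℝ) : |(T ℝ n).eval (-z)| = |(T ℝ n).eval z| := by
      rw [T_eval_neg, abs_mul, ← Int.cast_abs, Int.abs_negOnePow, Int.cast_one, one_mul]
    have abs_eval : |(T ℝ n).eval x| = (T ℝ n).eval |x| := by
      rw [← abs_of_pos (zero_lt_one.trans_le (one_le_eval_T_real n hx))]
      rcases abs_choice x with h | h <;> rw [h]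
      rw [abs_eval_neg]
    rw [abs_eval, ← Real.cosh_arcosh hx, ← Real.cosh_arcosh hy, T_real_cosh, T_real_cosh,
      Real.cosh_le_cosh, abs_mul, abs_mul]
    rw [← Real.cosh_arcosh hx, ← Real.cosh_arcosh hy, Real.cosh_le_cosh] at hxy
    gcongr

theorem one_le_two_mul_exp_neg_mul_eval_T_cosh {θ r : ℝ} (hθ : 0 ≤ θ) {v : ℤ} (hv : r ≤ |(v : ℝ)|) :
    1 ≤ 2 * Real.exp (-(r * θ)) * (T ℝ v).eval (Real.cosh θ) := by
  have exp_le : Real.exp (r * θ) / 2 ≤ (T ℝ v).eval (Real.cosh θ) := by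
    have : Real.exp (r * θ) ≤ Real.exp (|(v : ℝ)| * θ) := by gcongr
    rw [T_real_cosh, ← Real.cosh_abs, abs_mul, abs_of_nonneg hθ, Real.cosh_eq]
    linarith [Real.exp_pos (-(|(v : ℝ)| * θ))]
  calc (1 : ℝ) = 2 * Real.exp (-(r * θ)) * (Real.exp (r * θ) / 2) := by
        rw [Real.exp_neg]
        field_simp
    _ ≤ _ := by gcongr

/-- The `v`-th Chebyshev coefficient of the power series `∑ aₙ xⁿ`, normalised so that the
expansion of its sum is `c₀ / 2 + ∑_{v ≥ 1} c_v T_v`. -/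
noncomputable def chebSeriesCoeff (a : ℕ → ℝ) (v : ℕ) : ℝ :=
  2 * ∑' n, a n * 2⁻¹ ^ n * walkCount n v

variable {a : ℕ → ℝ}

theorem chebSeriesCoeff_nonneg (ha : ∀ n, 0 ≤ a n) (v : ℕ) : 0 ≤ chebSeriesCoeff a v :=
  mul_nonneg zero_le_two <| tsum_nonneg fun n ↦ by have := ha n; positivity

theorem hasSum_walkCount_mul_eval_T (c x : ℝ) (n : ℕ) :
    HasSum (fun v : ℤ ↦ c * 2⁻¹ ^ n * walkCount n v.natAbs * (T ℝ v).eval x) (c * x ^ n) := by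
  have two_mul_pow : (2 * x) ^ n =
      ∑ v ∈ Finset.Icc (-n : ℤ) n, walkCount n v.natAbs * (T ℝ v).eval x := by
    simpa [eval_finsetSum] using congrArg (eval x) (two_mul_X_pow_eq_sum_walkCount_nsmul_T ℝ n)
  have eq_sum : c * x ^ n = ∑ v ∈ Finset.Icc (-n : ℤ) n,
      c * 2⁻¹ ^ n * walkCount n v.natAbs * (T ℝ v).eval x := by
    simp only [mul_assoc, ← Finset.mul_sum]
    rw [← two_mul_pow, ← mul_pow, inv_mul_cancel_left₀ two_ne_zero]
  rw [eq_sum]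
  refine hasSum_sum_of_ne_finset_zero fun v hv ↦ ?_
  rw [Finset.mem_Icc] at hv
  rw [walkCount_eq_zero_of_lt (by omega), Nat.cast_zero, mul_zero, zero_mul]

-- At `y ≥ 1` every term is nonnegative, so there the iterated sum controls the double sum.
theorem summable_walkCount_mul_eval_T (ha : ∀ n, 0 ≤ a n) {x y : ℝ} (hy : 1 ≤ y)
    (hs : Summable fun n ↦ a n * y ^ n) (hxy : |x| ≤ y) :
    Summable fun p : ℕ × ℤ ↦
      a p.1 * 2⁻¹ ^ p.1 * walkCount p.1 p.2.natAbs * (T ℝ p.2).eval x := by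
  have coeff_nonneg (p : ℕ × ℤ) : 0 ≤ a p.1 * 2⁻¹ ^ p.1 * walkCount p.1 p.2.natAbs := by
    have := ha p.1
    positivity
  have summable_y : Summable fun p : ℕ × ℤ ↦
      a p.1 * 2⁻¹ ^ p.1 * walkCount p.1 p.2.natAbs * (T ℝ p.2).eval y := by
    refine (summable_prod_of_nonneg fun p ↦ ?_).mpr
      ⟨fun n ↦ (hasSum_walkCount_mul_eval_T (a n) y n).summable, ?_⟩
    · exact mul_nonneg (coeff_nonneg p) (zero_le_one.trans (one_le_eval_T_real p.2 hy))
    · simpa only [(hasSum_walkCount_mul_eval_T _ y _).tsum_eq] using hs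
  refine summable_y.of_norm_bounded fun p ↦ ?_
  rw [norm_mul, Real.norm_of_nonneg (coeff_nonneg p), Real.norm_eq_abs]
  exact mul_le_mul_of_nonneg_left (abs_eval_T_le_eval_T_of_abs_le _ hy hxy) (coeff_nonneg p)

theorem hasSum_chebSeriesCoeff_mul_eval_T (ha : ∀ n, 0 ≤ a n) {x y : ℝ} (hy : 1 ≤ y)
    (hs : Summable fun n ↦ a n * y ^ n) (hxy : |x| ≤ y) :
    HasSum (fun v : ℤ ↦ chebSeriesCoeff a v.natAbs / 2 * (T ℝ v).eval x) (∑' n, a n * x ^ n) := by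
  have summable_pairs := summable_walkCount_mul_eval_T ha hy hs hxy
  have tsum_rows := summable_pairs.hasSum.prod_fiberwise
    fun n ↦ hasSum_walkCount_mul_eval_T (a n) x n
  rw [tsum_rows.tsum_eq]
  have hasSum_swap := (Equiv.prodComm ℤ ℕ).hasSum_iff.mpr summable_pairs.hasSum
  refine hasSum_swap.prod_fiberwise fun v ↦ ?_
  have column := (hasSum_swap.summable.prod_factor v).hasSum
  simp only [Function.comp_apply, Equiv.prodComm_apply, Prod.swap_prod_mk, tsum_mul_right]
    at column
  rwa [chebSeriesCoeff, mul_div_cancel_left₀ _ two_ne_zero]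

theorem chebSeriesCoeff_le_two_mul_tsum (ha : ∀ n, 0 ≤ a n) (hs : Summable a) (v : ℕ) :
    chebSeriesCoeff a v ≤ 2 * ∑' n, a n := by
  have hasSum_one := hasSum_chebSeriesCoeff_mul_eval_T ha le_rfl (x := 1) (by simpa using hs)
    abs_one.le
  simp only [T_eval_one, one_pow, mul_one] at hasSum_one
  have term_le := le_hasSum hasSum_one v fun w _ ↦
    div_nonneg (chebSeriesCoeff_nonneg ha w.natAbs) zero_le_two
  rw [Int.natAbs_natCast] at term_le
  linarith

theorem sum_Icc_neg_chebSeriesCoeff_mul_eval_T (a : ℕ → ℝ) (x : ℝ) (d : ℕ) :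
    ∑ v ∈ Finset.Icc (-d : ℤ) d, chebSeriesCoeff a v.natAbs / 2 * (T ℝ v).eval x =
      chebSeriesCoeff a 0 / 2 +
        ∑ v ∈ Finset.Icc 1 d, chebSeriesCoeff a v * (T ℝ v).eval x := by
  rw [Finset.sum_Icc_of_even_eq_range (fun v ↦ by simp), Finset.sum_range_eq_add_Ico _ (by simp),
    smul_add, Finset.smul_sum]
  have two_smul_half (v : ℕ) : (2 • (chebSeriesCoeff a v / 2 * (T ℝ v).eval x) : ℝ) =
      chebSeriesCoeff a v * (T ℝ v).eval x := by
    rw [two_nsmul]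
    ring
  simp only [Int.natAbs_natCast, two_smul_half, Finset.Ico_add_one_right_eq_Icc, Nat.cast_zero,
    T_zero, eval_one, Int.natAbs_zero, mul_one]
  ring

theorem abs_sum_sub_le_mul_of_abs_le_mul {ι : Type*} {f g : ι → ℝ} {F G c : ℝ} (hf : HasSum f F)
    (hg : HasSum g G) (hg₀ : ∀ i, 0 ≤ g i) (hc : 0 ≤ c) {s : Finset ι}
    (hfg : ∀ i ∉ s, |f i| ≤ c * g i) : |∑ i ∈ s, f i - F| ≤ c * G := by
  have tail_f : HasSum (fun i : {i // i ∉ s} ↦ f i) (F - ∑ i ∈ s, f i) :=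
    s.hasSum_compl_iff.mpr (by rwa [sub_add_cancel])
  have tail_g : HasSum (fun i : {i // i ∉ s} ↦ g i) (G - ∑ i ∈ s, g i) :=
    s.hasSum_compl_iff.mpr (by rwa [sub_add_cancel])
  rw [abs_sub_comm]
  calc |F - ∑ i ∈ s, f i| ≤ c * (G - ∑ i ∈ s, g i) :=
        tail_f.norm_le_of_bounded (tail_g.mul_left c) fun i ↦ hfg i i.2
    _ ≤ c * G := by
        gcongr
        exact sub_le_self _ (Finset.sum_nonneg fun i _ ↦ hg₀ i)

theorem abs_chebSeries_partialSum_sub_tsum_le (ha : ∀ n, 0 ≤ a n) {θ x : ℝ} (hθ : 0 ≤ θ)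
    (hs : Summable fun n ↦ a n * Real.cosh θ ^ n) (hx : |x| ≤ 1) (d : ℕ) :
    |chebSeriesCoeff a 0 / 2 + (∑ v ∈ Finset.Icc 1 d, chebSeriesCoeff a v * (T ℝ v).eval x)
        - ∑' n, a n * x ^ n| ≤
      2 * Real.exp (-((d + 1) * θ)) * ∑' n, a n * Real.cosh θ ^ n := by
  have one_le_cosh := Real.one_le_cosh θ
  have hasSum_x := hasSum_chebSeriesCoeff_mul_eval_T ha one_le_cosh hs (hx.trans one_le_cosh)
  have hasSum_cosh := hasSum_chebSeriesCoeff_mul_eval_T ha one_le_cosh hs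
    (abs_of_pos (Real.cosh_pos θ)).le
  have coeff_nonneg (v : ℤ) : 0 ≤ chebSeriesCoeff a v.natAbs / 2 :=
    div_nonneg (chebSeriesCoeff_nonneg ha _) zero_le_two
  have term_cosh_nonneg (v : ℤ) :
      0 ≤ chebSeriesCoeff a v.natAbs / 2 * (T ℝ v).eval (Real.cosh θ) :=
    mul_nonneg (coeff_nonneg v) (zero_le_one.trans (one_le_eval_T_real v one_le_cosh))
  rw [← sum_Icc_neg_chebSeriesCoeff_mul_eval_T]
  refine abs_sum_sub_le_mul_of_abs_le_mul hasSum_x hasSum_cosh term_cosh_nonneg (by positivity)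
    fun v hv ↦ ?_
  have add_one_le_abs : (d + 1 : ℝ) ≤ |(v : ℝ)| := by
    rw [Finset.mem_Icc, ← abs_le, not_le] at hv
    exact_mod_cast Int.add_one_le_of_lt hv
  rw [abs_mul, abs_of_nonneg (coeff_nonneg v), mul_left_comm]
  exact mul_le_mul_of_nonneg_left ((abs_eval_T_real_le_one v hx).trans
    (one_le_two_mul_exp_neg_mul_eval_T_cosh hθ add_one_le_abs)) (coeff_nonneg v)

theorem hasSum_choose_mul_pow_one_sub_zpow_neg {u : ℝ} (hu : |u| < 1) (t : ℕ) :
    HasSum (fun n : ℕ ↦ ((n - 1 + t).choose n : ℝ) * u ^ n) ((1 - u) ^ (-(t : ℤ))) := by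
  cases t with
  | zero =>
    convert! hasSum_ite_eq 0 (1 : ℝ) using 2 with n
    cases n <;> simp
  | succ k =>
    convert! hasSum_choose_mul_geometric_of_norm_lt_one k (r := u) hu using 1
    · funext n
      cases n with
      | zero => simp
      | succ n => rw [← Nat.choose_symm_add, Nat.add_sub_cancel, Nat.add_right_comm, add_assoc]
    · rw [zpow_neg, zpow_natCast, one_div]

theorem chebCoeff_eq_chebSeriesCoeff (ε : ℝ) (t v : ℕ) :
    chebCoeff ε t v = chebSeriesCoeff (fun n ↦ ε ^ n * (n - 1 + t).choose n) v := by
  simp only [chebCoeff, chebSeriesCoeff, walkCount, Nat.cast_ite, Nat.cast_zero, mul_ite, mul_zero]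
  congr! 4
  ring

theorem hasSum_pow_mul_choose_mul_pow {ε x : ℝ} (h : |ε * x| < 1) (t : ℕ) :
    HasSum (fun n : ℕ ↦ ε ^ n * ((n - 1 + t).choose n : ℝ) * x ^ n)
      ((1 - ε * x) ^ (-(t : ℤ))) := by
  convert! hasSum_choose_mul_pow_one_sub_zpow_neg h t using 2 with n
  ring

theorem chebCoeff_le_two_mul_one_sub_zpow_neg {ε : ℝ} (hε₀ : 0 ≤ ε) (hε₁ : ε < 1) (t v : ℕ) :
    chebCoeff ε t v ≤ 2 * (1 - ε) ^ (-(t : ℤ)) := by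
  have hasSum_one := hasSum_pow_mul_choose_mul_pow (x := 1) (by rwa [mul_one, abs_of_nonneg hε₀]) t
  simp only [one_pow, mul_one] at hasSum_one
  rw [chebCoeff_eq_chebSeriesCoeff, ← hasSum_one.tsum_eq]
  exact chebSeriesCoeff_le_two_mul_tsum (fun n ↦ by positivity) hasSum_one.summable v

theorem abs_chebCoeff_partialSum_sub_le {ε θ x : ℝ} (hε : 0 ≤ ε) (hθ : 0 ≤ θ)
    (hεθ : ε * Real.cosh θ < 1) (hx : |x| ≤ 1) (t d : ℕ) :
    |chebCoeff ε t 0 / 2 + (∑ v ∈ Finset.Icc 1 d, chebCoeff ε t v * (T ℝ v).eval x)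
        - (1 - ε * x) ^ (-(t : ℤ))| ≤
      2 * Real.exp (-((d + 1) * θ)) * (1 - ε * Real.cosh θ) ^ (-(t : ℤ)) := by
  have abs_mul_lt {z : ℝ} (hz : |z| ≤ Real.cosh θ) : |ε * z| < 1 := by
    rw [abs_mul, abs_of_nonneg hε]
    exact (mul_le_mul_of_nonneg_left hz hε).trans_lt hεθ
  have hasSum_x := hasSum_pow_mul_choose_mul_pow (abs_mul_lt (hx.trans (Real.one_le_cosh θ))) t
  have hasSum_cosh :=
    hasSum_pow_mul_choose_mul_pow (abs_mul_lt (abs_of_pos (Real.cosh_pos θ)).le) t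
  simp only [chebCoeff_eq_chebSeriesCoeff]
  rw [← hasSum_x.tsum_eq, ← hasSum_cosh.tsum_eq]
  exact abs_chebSeries_partialSum_sub_tsum_le (fun n ↦ by positivity) hθ hasSum_cosh.summable hx d

theorem one_sub_zpow_neg_le_exp {u : ℝ} (hu₀ : 0 ≤ u) (hu₁ : u ≤ 16 / 25) (t : ℕ) :
    (1 - u) ^ (-(t : ℤ)) ≤ Real.exp (9 / 5 * u * t) := by
  have inv_le : (1 - u)⁻¹ ≤ Real.exp (9 / 5 * u) := by
    refine le_trans ?_ (Real.quadratic_le_exp_of_nonneg (by positivity))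
    rw [inv_le_iff_one_le_mul₀ (by linarith)]
    nlinarith [mul_nonneg hu₀ (sub_nonneg.mpr hu₁), mul_nonneg hu₀ hu₀,
      mul_nonneg (mul_nonneg hu₀ hu₀) (sub_nonneg.mpr hu₁)]
  calc (1 - u) ^ (-(t : ℤ)) = ((1 - u)⁻¹) ^ t := by rw [zpow_neg, zpow_natCast, inv_pow]
    _ ≤ Real.exp (9 / 5 * u) ^ t :=
      pow_le_pow_left₀ (inv_nonneg.mpr (by linarith)) inv_le t
    _ = Real.exp (9 / 5 * u * t) := by rw [← Real.exp_nat_mul, mul_comm]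

theorem chebCoeff_le_two_rpow {ε : ℝ} (hε₀ : 0 ≤ ε) (hε₁ : ε ≤ 16 / 25) (t v : ℕ) :
    chebCoeff ε t v ≤ 2 ^ (3 * ε * t + 1) := by
  have log_two_gt := Real.log_two_gt_d9
  calc chebCoeff ε t v ≤ 2 * (1 - ε) ^ (-(t : ℤ)) :=
        chebCoeff_le_two_mul_one_sub_zpow_neg hε₀ (by linarith) t v
    _ ≤ 2 * Real.exp (9 / 5 * ε * t) := by gcongr; exact one_sub_zpow_neg_le_exp hε₀ hε₁ t
    _ ≤ 2 * Real.exp (Real.log 2 * (3 * ε * t)) := by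
        have : 0 ≤ ε * t := by positivity
        exact mul_le_mul_of_nonneg_left (Real.exp_le_exp.mpr (by nlinarith)) zero_le_two
    _ = 2 ^ (3 * ε * t + 1) := by
        rw [Real.rpow_add_one two_ne_zero, Real.rpow_def_of_pos two_pos, mul_comm]

-- Here `cosh (log 4) = 17 / 8`; as `2 log 2 > 1.38`, the gain `4 ^ (-d)` beats `exp (-d)` by a
-- margin that absorbs `(1 - 17 / 8 ε) ^ (-t) ≤ exp (3.825 ε t) ≤ exp (0.3825 d)`.
theorem abs_chebCoeff_partialSum_sub_le_exp {ε x : ℝ} (hε₀ : 0 ≤ ε) (hε₁ : ε ≤ 3 / 10)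
    (hx : |x| ≤ 1) {t d : ℕ} (hd : 10 * ε * t ≤ d) :
    |chebCoeff ε t 0 / 2 + (∑ v ∈ Finset.Icc 1 d, chebCoeff ε t v * (T ℝ v).eval x)
        - (1 - ε * x) ^ (-(t : ℤ))| ≤ Real.exp (-d) := by
  have cosh_log_four : Real.cosh (Real.log 4) = 17 / 8 := by
    rw [Real.cosh_log four_pos]
    norm_num
  have log_four : Real.log 4 = 2 * Real.log 2 := by
    rw [← Real.log_rpow two_pos]
    norm_num
  have log_two_gt := Real.log_two_gt_d9
  calc _ ≤ 2 * Real.exp (-((d + 1) * Real.log 4)) *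
          (1 - ε * Real.cosh (Real.log 4)) ^ (-(t : ℤ)) :=
        abs_chebCoeff_partialSum_sub_le hε₀ (by positivity) (by rw [cosh_log_four]; linarith) hx t d
    _ ≤ Real.exp (Real.log 2) * Real.exp (-((d + 1) * Real.log 4)) *
          Real.exp (9 / 5 * (ε * (17 / 8)) * t) := by
        rw [cosh_log_four, Real.exp_log two_pos]
        gcongr
        exact one_sub_zpow_neg_le_exp (by positivity) (by linarith) t
    _ ≤ Real.exp (-d) := by
        rw [← Real.exp_add, ← Real.exp_add, Real.exp_le_exp, log_four]
        nlinarith [Nat.cast_nonneg (α := ℝ) d]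

theorem stmt_1_general (t : ℕ) {ε : ℝ} (hε : ε ∈ Set.Icc 0 (3 / 10)) :
    (∀ v, chebCoeff ε t v ≤ 2 ^ (3 * ε * t + 1)) ∧
    ∀ d : ℕ, 10 * ε * t ≤ d → ∀ x ∈ Set.Icc (-1 : ℝ) 1,
      |chebCoeff ε t 0 / 2 + (∑ v ∈ Finset.Icc 1 d, chebCoeff ε t v * (T ℝ v).eval x)
        - (1 - ε * x) ^ (-(t : ℤ))| ≤ Real.exp (-d) :=
  ⟨chebCoeff_le_two_rpow hε.1 (hε.2.trans (by norm_num)) t, fun _ hd _ hx ↦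
    abs_chebCoeff_partialSum_sub_le_exp hε.1 hε.2 (abs_le.mpr hx) hd⟩

end

/-- Bounds on the coefficients and the error of the truncated Chebyshev
expansion of `(1 - ε x)^{-t}` on `[-1, 1]`. -/
theorem stmt_1 :
    ∃ C₁ : ℝ, 0 < C₁ ∧ ∃ C₂ : ℝ, 0 < C₂ ∧
    ∀ t : ℕ, 2 ≤ t → ∀ ε : ℝ, ε ∈ Set.Ioc (0:ℝ) (1/10) →
    ∀ d : ℕ, 10 * ε * t ≤ (d : ℝ) →
      (∀ v ≤ d, chebCoeff ε t v ≤ (2:ℝ) ^ (C₁ * (ε * t + 1))) ∧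
      (∀ x ∈ Set.Icc (-1:ℝ) 1,
        |chebCoeff ε t 0 / 2
            + (∑ v ∈ Finset.Icc 1 d, chebCoeff ε t v * (Polynomial.Chebyshev.T ℝ v).eval x)
            - (1 - ε * x) ^ (-(t:ℤ))| ≤ C₂ * (d + 1) * Real.exp (-(d:ℝ))) := by
  refine ⟨3, three_pos, 1, one_pos, fun t _ ε hε d hd ↦ ?_⟩
  obtain ⟨coeff_le, error_le⟩ := stmt_1_general t ⟨hε.1.le, hε.2.trans (by norm_num)⟩
  refine ⟨fun v _ ↦ (coeff_le v).trans ?_, fun x hx ↦ (error_le d hd x hx).trans ?_⟩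
  · exact Real.rpow_le_rpow_of_exponent_le one_le_two (by linarith)
  · exact le_mul_of_one_le_left (Real.exp_pos _).le (by linarith [Nat.cast_nonneg (α := ℝ) d])
end

section
/- There is an absolute constant C > 0 such that the following holds. Let G be a d-regular simple graph on a finite vertex set V with |V| = n ≥ 2, let φ ∈ (0,1) and η ≥ 1 be reals, and suppose V is partitioned into nonempty clusters C_1, …, C_k such that φ_in(C_i) ≥ φ and |C_i| ≥ n/(η·k) for every i ∈ {1,…,k}. Let M̃ := (3/4)·I + (1/(4d))·A. Then for every integer t ≥ 10·(log n)/φ² and every vertex x ∈ V, ‖M̃^t 𝟙_x‖₂ ≤ C·√(η·k/n). -/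
open Finset

/-- `edgeCount G S T` is the number of edges of `G` with one endpoint in `S` and the
other in `T` (for disjoint `S`, `T` this counts each such edge exactly once). -/
def edgeCount {V : Type} [Fintype V] [DecidableEq V] (G : SimpleGraph V)
    [DecidableRel G.Adj] (S T : Finset V) : ℕ :=
  ∑ x ∈ S, ∑ y ∈ T, if G.Adj x y then 1 else 0

/-!
Write `M` for the lazy walk and `p_t = M ^ t 𝟙_x`. One step of the `α`-lazy walk decreases
`‖p_t‖²` by at least `α (1 - α)` times the Dirichlet energy of `p_t`. By a Cheeger inequality
inside each cluster, that energy is at least `φ²` times the sum of squared deviations of `p_t` from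
its cluster averages. Since `p_t` has total mass one, its cluster averages contribute at most
`B := η k / n` to `‖p_t‖²`, so `‖p_t‖² - B` contracts by a factor `1 - α (1 - α) φ²` per step and
is at most `1 / n ≤ B` at time `t`.

The Cheeger inequality comes from centring `p_t` at a median `m` of the cluster: with
`f = p_t - m`, every superlevel set above `0` and sublevel set below `0` of `f |f|` is at most half
of the cluster, and integrating their cuts over all levels bounds `∑ f²` by the total variation of
`f |f|`, to which Cauchy–Schwarz applies.
-/

open MeasureTheory

open scoped Function Interval

section Median

variable {ι α : Type*} [LinearOrder α]

theorem exists_mem_two_mul_card_lt_le {C : Finset ι} (hC : C.Nonempty) (f : ι → α) :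
    ∃ z ∈ C, 2 * #{x ∈ C | f x < f z} ≤ #C ∧ 2 * #{x ∈ C | f z < f x} ≤ #C := by
  obtain ⟨m, hm, hmax⟩ := exists_max_image C f hC
  have hne : {z ∈ C | #C ≤ 2 * #{x ∈ C | f x ≤ f z}}.Nonempty := by
    refine ⟨m, mem_filter.2 ⟨hm, ?_⟩⟩
    rw [filter_true_of_mem hmax]
    lia
  obtain ⟨z, hz, hmin⟩ := exists_min_image _ f hne
  obtain ⟨hzC, hz_half⟩ := mem_filter.1 hz
  refine ⟨z, hzC, ?_, ?_⟩
  · by_contra! hlow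
    obtain ⟨b, hb, hbmax⟩ := exists_max_image {x ∈ C | f x < f z} f (card_pos.1 (by lia))
    obtain ⟨hbC, hbz⟩ := mem_filter.1 hb
    have hsub : {x ∈ C | f x < f z} ⊆ {x ∈ C | f x ≤ f b} := fun x hx =>
      mem_filter.2 ⟨(mem_filter.1 hx).1, hbmax x hx⟩
    have hcard := card_le_card hsub
    exact hbz.not_ge (hmin b (mem_filter.2 ⟨hbC, by lia⟩))
  · have hsplit := card_filter_add_card_filter_not (s := C) (fun x => f x ≤ f z)
    simp only [not_le] at hsplit
    lia

end Median

section LayerCake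

variable (a b : ℝ)

theorem abs_indicator_Iic_sub_indicator_Iic (t : ℝ) :
    |(Set.Iic a).indicator (1 : ℝ → ℝ) t - (Set.Iic b).indicator 1 t| =
      (Ι a b).indicator 1 t := by
  simp only [Set.indicator, Set.mem_Iic, Set.mem_uIoc, Pi.one_apply]
  grind

theorem integrable_abs_indicator_Iic_sub_indicator_Iic :
    Integrable fun t => |(Set.Iic a).indicator (1 : ℝ → ℝ) t - (Set.Iic b).indicator 1 t| := by
  simp only [abs_indicator_Iic_sub_indicator_Iic]
  exact IntegrableOn.integrable_indicator (integrableOn_const (by simp)) measurableSet_uIoc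

theorem integral_abs_indicator_Iic_sub_indicator_Iic :
    ∫ t, |(Set.Iic a).indicator (1 : ℝ → ℝ) t - (Set.Iic b).indicator 1 t| = |a - b| := by
  simp only [abs_indicator_Iic_sub_indicator_Iic]
  rw [integral_indicator_one measurableSet_uIoc, Measure.real, Real.volume_uIoc,
    ENNReal.toReal_ofReal (abs_nonneg _), abs_sub_comm]

end LayerCake

section WeightedGraph

variable {V : Type*} {W : Matrix V V ℝ} {C : Finset V}

/-- The total variation on `C` of a function on the weighted graph `W`. The sum is over ordered
pairs, so an undirected edge counts twice. -/
def totalVariation (W : Matrix V V ℝ) (C : Finset V) (f : V → ℝ) : ℝ :=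
  ∑ x ∈ C, ∑ y ∈ C, W x y * |f x - f y|

/-- The Dirichlet energy on `C` of a function on the weighted graph `W`. The sum is over ordered
pairs, so an undirected edge counts twice. -/
def dirichletEnergy (W : Matrix V V ℝ) (C : Finset V) (f : V → ℝ) : ℝ :=
  ∑ x ∈ C, ∑ y ∈ C, W x y * (f x - f y) ^ 2

/-- The weighted graph induced by `W` on `C` is a `c`-edge-expander: each subset of at most half the
size of `C` has weighted edge boundary in `C` at least `c` times its size. For `W = d⁻¹ • A` with
`A` the adjacency matrix of a `d`-regular graph, this says that `C` has inner conductance at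
least `c`, up to the convention for clusters with at most one vertex. -/
def HasInnerExpansion [DecidableEq V] (W : Matrix V V ℝ) (C : Finset V) (c : ℝ) : Prop :=
  ∀ S ⊆ C, 2 * #S ≤ #C → c * #S ≤ ∑ x ∈ S, ∑ y ∈ C \ S, W x y

theorem totalVariation_eq_integral (f : V → ℝ) :
    totalVariation W C f =
      ∫ t, totalVariation W C fun x => (Set.Iic (f x)).indicator 1 t := by
  have hint (x y : V) := (integrable_abs_indicator_Iic_sub_indicator_Iic (f x) (f y)).const_mul
    (W x y)
  simp only [totalVariation]
  rw [integral_finsetSum _ fun x _ => integrable_finsetSum _ fun y _ => hint x y]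
  refine sum_congr rfl fun x _ => ?_
  rw [integral_finsetSum _ fun y _ => hint x y]
  simp only [integral_const_mul, integral_abs_indicator_Iic_sub_indicator_Iic]

theorem totalVariation_congr {f g : V → ℝ}
    (h : ∀ x ∈ C, ∀ y ∈ C, |f x - f y| = |g x - g y|) :
    totalVariation W C f = totalVariation W C g :=
  sum_congr rfl fun x hx => sum_congr rfl fun y hy => by rw [h x hx y hy]

theorem totalVariation_indicator [DecidableEq V] (hW : W.IsSymm) {S : Finset V} (hS : S ⊆ C) :
    totalVariation W C ((S : Set V).indicator 1) = 2 * ∑ x ∈ S, ∑ y ∈ C \ S, W x y := by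
  have hin : ∀ x ∈ S, ∑ y ∈ C, W x y * |(S : Set V).indicator (1 : V → ℝ) x -
      (S : Set V).indicator 1 y| = ∑ y ∈ C \ S, W x y := fun x hx => by
    rw [← sum_sdiff hS, sum_eq_zero (s := S) fun y hy => by simp [hx, hy], add_zero]
    exact sum_congr rfl fun y hy => by simp [hx, (mem_sdiff.1 hy).2]
  have hout : ∀ x ∈ C \ S, ∑ y ∈ C, W x y * |(S : Set V).indicator (1 : V → ℝ) x -
      (S : Set V).indicator 1 y| = ∑ y ∈ S, W x y := fun x hx => by
    have hxS := (mem_sdiff.1 hx).2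
    rw [← sum_sdiff hS, sum_eq_zero (s := C \ S) fun y hy => by simp [hxS, (mem_sdiff.1 hy).2],
      zero_add]
    exact sum_congr rfl fun y hy => by simp [hxS, hy]
  have hswap : ∑ x ∈ C \ S, ∑ y ∈ S, W x y = ∑ x ∈ S, ∑ y ∈ C \ S, W x y :=
    sum_comm.trans <| sum_congr rfl fun x _ => sum_congr rfl fun y _ => hW.apply x y
  rw [totalVariation, ← sum_sdiff hS, sum_congr rfl hin, sum_congr rfl hout, hswap, two_mul]

theorem mul_abs_self_pos_iff {a : ℝ} : 0 < a * |a| ↔ 0 < a := by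
  rw [mul_pos_iff]
  grind

theorem mul_abs_self_neg_iff {a : ℝ} : a * |a| < 0 ↔ a < 0 := by
  rw [mul_neg_iff]
  grind

theorem abs_mul_abs_sub_mul_abs_le (a b : ℝ) :
    |a * |a| - (b * |b|)| ≤ |a - b| * (|a| + |b|) := by
  have hsplit : a * |a| - b * |b| = ((a - b) * (|a| + |b|) + (a + b) * (|a| - |b|)) / 2 := by ring
  have hfst : |(a - b) * (|a| + |b|)| = |a - b| * (|a| + |b|) := by
    rw [abs_mul, abs_of_nonneg (by positivity : 0 ≤ |a| + |b|)]
  have hsnd : |(a + b) * (|a| - |b|)| ≤ |a - b| * (|a| + |b|) := by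
    rw [abs_mul, mul_comm]
    exact mul_le_mul (abs_abs_sub_abs_le_abs_sub a b) (abs_add_le a b) (abs_nonneg _)
      (abs_nonneg _)
  rw [hsplit, abs_div, abs_two, div_le_iff₀ two_pos]
  linarith [abs_add_le ((a - b) * (|a| + |b|)) ((a + b) * (|a| - |b|))]

variable {c D : ℝ} {f : V → ℝ}

theorem totalVariation_mul_abs_sq_le (hW₀ : ∀ x y, 0 ≤ W x y) :
    totalVariation W C (fun x => f x * |f x|) ^ 2 ≤
      dirichletEnergy W C f * ∑ x ∈ C, ∑ y ∈ C, W x y * (|f x| + |f y|) ^ 2 := by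
  have hlin : totalVariation W C (fun x => f x * |f x|) ≤
      ∑ x ∈ C, ∑ y ∈ C, W x y * (|f x - f y| * (|f x| + |f y|)) :=
    sum_le_sum fun x _ => sum_le_sum fun y _ =>
      mul_le_mul_of_nonneg_left (abs_mul_abs_sub_mul_abs_le _ _) (hW₀ x y)
  have hTV : 0 ≤ totalVariation W C (fun x => f x * |f x|) :=
    sum_nonneg fun x _ => sum_nonneg fun y _ => mul_nonneg (hW₀ x y) (abs_nonneg _)
  refine (pow_le_pow_left₀ hTV hlin 2).trans ?_
  simp only [dirichletEnergy, ← sum_product']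
  refine sum_sq_le_sum_mul_sum_of_sq_le_mul _
    (fun e _ => mul_nonneg (hW₀ e.1 e.2) (sq_nonneg _))
    (fun e _ => mul_nonneg (hW₀ e.1 e.2) (sq_nonneg _)) fun e _ => le_of_eq ?_
  rw [mul_pow, mul_pow, sq_abs]
  ring

theorem sum_sum_mul_sq_abs_add_abs_le (hW : W.IsSymm) (hW₀ : ∀ x y, 0 ≤ W x y)
    (hdeg : ∀ x ∈ C, ∑ y ∈ C, W x y ≤ D) :
    ∑ x ∈ C, ∑ y ∈ C, W x y * (|f x| + |f y|) ^ 2 ≤ 4 * D * ∑ x ∈ C, f x ^ 2 := by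
  have hleft : ∑ x ∈ C, ∑ y ∈ C, W x y * f x ^ 2 ≤ D * ∑ x ∈ C, f x ^ 2 := by
    rw [mul_sum]
    refine sum_le_sum fun x hx => ?_
    rw [← sum_mul]
    exact mul_le_mul_of_nonneg_right (hdeg x hx) (sq_nonneg _)
  have hright : ∑ x ∈ C, ∑ y ∈ C, W x y * f y ^ 2 = ∑ x ∈ C, ∑ y ∈ C, W x y * f x ^ 2 :=
    sum_comm.trans <| sum_congr rfl fun x _ => sum_congr rfl fun y _ => by rw [hW.apply]
  calc ∑ x ∈ C, ∑ y ∈ C, W x y * (|f x| + |f y|) ^ 2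
      ≤ ∑ x ∈ C, ∑ y ∈ C, W x y * (2 * (|f x| ^ 2 + |f y| ^ 2)) :=
        sum_le_sum fun x _ => sum_le_sum fun y _ =>
          mul_le_mul_of_nonneg_left add_sq_le (hW₀ x y)
    _ = 2 * (∑ x ∈ C, ∑ y ∈ C, W x y * f x ^ 2 + ∑ x ∈ C, ∑ y ∈ C, W x y * f y ^ 2) := by
        simp only [sq_abs, mul_sum, ← sum_add_distrib]
        exact sum_congr rfl fun x _ => sum_congr rfl fun y _ => by ring
    _ ≤ 4 * D * ∑ x ∈ C, f x ^ 2 := by linarith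

theorem sum_sq_sub_sq_sum_div_card_le (p : V → ℝ) (a : ℝ) :
    ∑ x ∈ C, p x ^ 2 - (∑ x ∈ C, p x) ^ 2 / #C ≤ ∑ x ∈ C, (p x - a) ^ 2 := by
  rcases C.eq_empty_or_nonempty with rfl | hC
  · simp
  have hcard : (0 : ℝ) < #C := by exact_mod_cast hC.card_pos
  have hexpand : ∑ x ∈ C, (p x - a) ^ 2 =
      ∑ x ∈ C, p x ^ 2 - 2 * a * ∑ x ∈ C, p x + #C * a ^ 2 := by
    simp only [sub_sq, sum_add_distrib, sum_sub_distrib, sum_const, nsmul_eq_mul, mul_sum]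
    congr! 3
    ring
  have hsquare : ∑ x ∈ C, (p x - a) ^ 2 - (∑ x ∈ C, p x ^ 2 - (∑ x ∈ C, p x) ^ 2 / #C) =
      (∑ x ∈ C, p x - #C * a) ^ 2 / #C := by
    rw [hexpand]
    field_simp
    ring
  exact sub_nonneg.1 (hsquare ▸ div_nonneg (sq_nonneg _) hcard.le)

variable [DecidableEq V]

namespace HasInnerExpansion

theorem two_mul_mul_card_le_totalVariation (hC : HasInnerExpansion W C c) (hW : W.IsSymm)
    {S : Finset V} (hS : S ⊆ C) (hcard : 2 * #S ≤ #C) :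
    2 * c * #S ≤ totalVariation W C ((S : Set V).indicator 1) := by
  rw [totalVariation_indicator hW hS, mul_assoc]
  exact mul_le_mul_of_nonneg_left (hC S hS hcard) zero_le_two

theorem two_mul_mul_sum_abs_indicator_Iic_le_totalVariation (hC : HasInnerExpansion W C c)
    (hW : W.IsSymm) (hpos : 2 * #{x ∈ C | 0 < f x} ≤ #C) (hneg : 2 * #{x ∈ C | f x < 0} ≤ #C)
    (t : ℝ) :
    2 * c * ∑ x ∈ C, |(Set.Iic (f x)).indicator (1 : ℝ → ℝ) t - (Set.Iic 0).indicator 1 t| ≤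
      totalVariation W C fun x => (Set.Iic (f x)).indicator 1 t := by
  rcases lt_or_ge 0 t with ht | ht
  · let S : Finset V := {x ∈ C | t ≤ f x}
    have hcard : #S ≤ #{x ∈ C | 0 < f x} :=
      card_le_card (monotone_filter_right C fun x _ hx => ht.trans_le hx)
    have hlevel (x : V) : |(Set.Iic (f x)).indicator (1 : ℝ → ℝ) t - (Set.Iic 0).indicator 1 t| =
        if t ≤ f x then 1 else 0 := by
      simp only [Set.indicator, Set.mem_Iic, Pi.one_apply]
      grind
    calc _ = 2 * c * #S := by simp only [hlevel, sum_boole, S]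
      _ ≤ totalVariation W C ((S : Set V).indicator 1) :=
        hC.two_mul_mul_card_le_totalVariation hW (filter_subset _ C)
          ((Nat.mul_le_mul_left 2 hcard).trans hpos)
      _ = _ := totalVariation_congr fun x hx y hy => by simp [Set.indicator, S, hx, hy]
  · let S : Finset V := {x ∈ C | f x < t}
    have hcard : #S ≤ #{x ∈ C | f x < 0} :=
      card_le_card (monotone_filter_right C fun x _ hx => hx.trans_le ht)
    have hlevel (x : V) : |(Set.Iic (f x)).indicator (1 : ℝ → ℝ) t - (Set.Iic 0).indicator 1 t| =
        if f x < t then 1 else 0 := by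
      simp only [Set.indicator, Set.mem_Iic, Pi.one_apply]
      grind
    have hcompl {x : V} (hx : x ∈ C) :
        (Set.Iic (f x)).indicator (1 : ℝ → ℝ) t = 1 - (S : Set V).indicator 1 x := by
      simp only [Set.indicator, Set.mem_Iic, Pi.one_apply, S, mem_coe, mem_filter, hx]
      grind
    calc _ = 2 * c * #S := by simp only [hlevel, sum_boole, S]
      _ ≤ totalVariation W C ((S : Set V).indicator 1) :=
        hC.two_mul_mul_card_le_totalVariation hW (filter_subset _ C)
          ((Nat.mul_le_mul_left 2 hcard).trans hneg)
      _ = _ := totalVariation_congr fun x hx y hy => by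
        rw [hcompl hx, hcompl hy, sub_sub_sub_cancel_left, abs_sub_comm]

theorem two_mul_mul_sum_abs_le_totalVariation (hC : HasInnerExpansion W C c) (hW : W.IsSymm)
    (hpos : 2 * #{x ∈ C | 0 < f x} ≤ #C) (hneg : 2 * #{x ∈ C | f x < 0} ≤ #C) :
    2 * c * ∑ x ∈ C, |f x| ≤ totalVariation W C f := by
  have hlayer : ∑ x ∈ C, |f x| = ∫ t, ∑ x ∈ C,
      |(Set.Iic (f x)).indicator (1 : ℝ → ℝ) t - (Set.Iic 0).indicator 1 t| := by
    rw [integral_finsetSum _ fun x _ =>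
      integrable_abs_indicator_Iic_sub_indicator_Iic (f x) 0]
    simp only [integral_abs_indicator_Iic_sub_indicator_Iic, sub_zero]
  rw [hlayer, ← integral_const_mul, totalVariation_eq_integral]
  refine integral_mono ?_ ?_ (hC.two_mul_mul_sum_abs_indicator_Iic_le_totalVariation hW hpos hneg)
  · exact (integrable_finsetSum _ fun x _ =>
      integrable_abs_indicator_Iic_sub_indicator_Iic (f x) 0).const_mul _
  · exact integrable_finsetSum _ fun x _ => integrable_finsetSum _ fun y _ =>
      (integrable_abs_indicator_Iic_sub_indicator_Iic (f x) (f y)).const_mul _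

theorem sq_mul_sum_sq_le_mul_dirichletEnergy (hC : HasInnerExpansion W C c) (hc : 0 ≤ c)
    (hW : W.IsSymm) (hW₀ : ∀ x y, 0 ≤ W x y) (hdeg : ∀ x ∈ C, ∑ y ∈ C, W x y ≤ D)
    (hpos : 2 * #{x ∈ C | 0 < f x} ≤ #C) (hneg : 2 * #{x ∈ C | f x < 0} ≤ #C) :
    c ^ 2 * ∑ x ∈ C, f x ^ 2 ≤ D * dirichletEnergy W C f := by
  set Q := ∑ x ∈ C, f x ^ 2 with hQ
  have hE : 0 ≤ dirichletEnergy W C f :=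
    sum_nonneg fun x _ => sum_nonneg fun y _ => mul_nonneg (hW₀ x y) (sq_nonneg _)
  have hexp : 2 * c * Q ≤ totalVariation W C fun x => f x * |f x| := by
    convert hC.two_mul_mul_sum_abs_le_totalVariation hW (f := fun x => f x * |f x|) ?_ ?_ using 2
    · exact sum_congr rfl fun x _ => by rw [abs_mul, abs_abs, abs_mul_abs_self, sq]
    · simpa only [mul_abs_self_pos_iff] using hpos
    · simpa only [mul_abs_self_neg_iff] using hneg
  have hquad : (2 * c * Q) ^ 2 ≤ dirichletEnergy W C f * (4 * D * Q) :=
    calc (2 * c * Q) ^ 2 ≤ totalVariation W C (fun x => f x * |f x|) ^ 2 := by gcongr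
      _ ≤ _ := totalVariation_mul_abs_sq_le hW₀
      _ ≤ _ := mul_le_mul_of_nonneg_left (sum_sum_mul_sq_abs_add_abs_le hW hW₀ hdeg) hE
  rcases C.eq_empty_or_nonempty with rfl | ⟨x, hx⟩
  · simp [hQ, dirichletEnergy]
  have hD : 0 ≤ D := (sum_nonneg fun y _ => hW₀ x y).trans (hdeg x hx)
  rcases (by positivity : 0 ≤ Q).eq_or_lt with hQ₀ | hQ₀
  · rw [← hQ₀, mul_zero]
    exact mul_nonneg hD hE
  · refine le_of_mul_le_mul_right ?_ (mul_pos four_pos hQ₀)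
    linarith

theorem sq_mul_sum_sq_sub_le_mul_dirichletEnergy (hC : HasInnerExpansion W C c) (hc : 0 ≤ c)
    (hW : W.IsSymm) (hW₀ : ∀ x y, 0 ≤ W x y) (hdeg : ∀ x ∈ C, ∑ y ∈ C, W x y ≤ D) (p : V → ℝ) :
    c ^ 2 * (∑ x ∈ C, p x ^ 2 - (∑ x ∈ C, p x) ^ 2 / #C) ≤ D * dirichletEnergy W C p := by
  rcases C.eq_empty_or_nonempty with rfl | hne
  · simp [dirichletEnergy]
  obtain ⟨z, -, hlow, hhigh⟩ := exists_mem_two_mul_card_lt_le hne p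
  calc c ^ 2 * (∑ x ∈ C, p x ^ 2 - (∑ x ∈ C, p x) ^ 2 / #C)
      ≤ c ^ 2 * ∑ x ∈ C, (p x - p z) ^ 2 :=
        mul_le_mul_of_nonneg_left (sum_sq_sub_sq_sum_div_card_le p (p z)) (sq_nonneg c)
    _ ≤ D * dirichletEnergy W C fun x => p x - p z :=
        hC.sq_mul_sum_sq_le_mul_dirichletEnergy hc hW hW₀ hdeg (by simpa only [sub_pos] using hhigh)
          (by simpa only [sub_neg] using hlow)
    _ = D * dirichletEnergy W C p := by simp only [dirichletEnergy, sub_sub_sub_cancel_right]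

end HasInnerExpansion

end WeightedGraph

theorem one_sub_pow_le_inv {a y : ℝ} (ha : a ≤ 1) (hy : 0 < y) {t : ℕ}
    (ht : Real.log y ≤ t * a) : (1 - a) ^ t ≤ y⁻¹ :=
  calc (1 - a) ^ t ≤ Real.exp (-a) ^ t :=
        pow_le_pow_left₀ (sub_nonneg.2 ha) (Real.one_sub_le_exp_neg a) t
    _ = Real.exp (-(t * a)) := by rw [← Real.exp_nat_mul, mul_neg]
    _ ≤ Real.exp (-Real.log y) := Real.exp_le_exp.2 (neg_le_neg ht)
    _ = y⁻¹ := by rw [Real.exp_neg, Real.exp_log hy]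

section LazyWalk

variable {V : Type*} [Fintype V] [DecidableEq V] {P : Matrix V V ℝ} {α φ B : ℝ} {p : V → ℝ}

open Matrix

/-- The transition matrix of the lazy version of the random walk `P`: stay put with probability `α`,
move according to `P` otherwise. -/
def lazyWalk (α : ℝ) (P : Matrix V V ℝ) : Matrix V V ℝ := α • 1 + (1 - α) • P

theorem lazyWalk_mem_doublyStochastic (hP : P ∈ doublyStochastic ℝ V) (hα : α ∈ Set.Icc 0 1) :
    lazyWalk α P ∈ doublyStochastic ℝ V :=
  convex_doublyStochastic (one_mem (doublyStochastic ℝ V)) hP hα.1 (sub_nonneg.2 hα.2)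
    (add_sub_cancel α 1)

theorem mulVec_mem_stdSimplex (hP : P ∈ doublyStochastic ℝ V) (hp : p ∈ stdSimplex ℝ V) :
    P *ᵥ p ∈ stdSimplex ℝ V :=
  ⟨fun _ => sum_nonneg fun y _ => mul_nonneg (nonneg_of_mem_doublyStochastic hP) (hp.1 y),
    (sum_mulVec_of_mem_doublyStochastic hP).trans hp.2⟩

theorem dirichletEnergy_univ_eq (hP : P ∈ doublyStochastic ℝ V) (p : V → ℝ) :
    dirichletEnergy P univ p = 2 * ∑ x, p x * (p x - (P *ᵥ p) x) := by
  have hrow : ∑ x, ∑ y, P x y * p x ^ 2 = ∑ x, p x ^ 2 := by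
    simp only [← sum_mul, sum_row_of_mem_doublyStochastic hP, one_mul]
  have hcol : ∑ x, ∑ y, P x y * p y ^ 2 = ∑ x, p x ^ 2 := by
    refine sum_comm.trans ?_
    simp only [← sum_mul, sum_col_of_mem_doublyStochastic hP, one_mul]
  calc dirichletEnergy P univ p
      = ∑ x, ∑ y, P x y * p x ^ 2 + ∑ x, ∑ y, P x y * p y ^ 2 -
          2 * ∑ x, ∑ y, p x * (P x y * p y) := by
        simp only [dirichletEnergy, mul_sum, ← sum_add_distrib, ← sum_sub_distrib]
        exact sum_congr rfl fun x _ => sum_congr rfl fun y _ => by ring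
    _ = 2 * ∑ x, p x * (p x - (P *ᵥ p) x) := by
        rw [hrow, hcol]
        simp only [mulVec, dotProduct, mul_sub, sum_sub_distrib, ← mul_sum, ← sq]
        ring

theorem sum_sub_mulVec_sq_le_dirichletEnergy (hP : P ∈ doublyStochastic ℝ V) (p : V → ℝ) :
    ∑ x, (p x - (P *ᵥ p) x) ^ 2 ≤ dirichletEnergy P univ p := by
  refine sum_le_sum fun x _ => ?_
  have hmean : p x - (P *ᵥ p) x = ∑ y, P x y * (p x - p y) := by
    simp only [mul_sub, sum_sub_distrib, ← sum_mul, sum_row_of_mem_doublyStochastic hP, one_mul,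
      mulVec, dotProduct]
  rw [hmean]
  calc (∑ y, P x y * (p x - p y)) ^ 2
      ≤ (∑ y, P x y) * ∑ y, P x y * (p x - p y) ^ 2 :=
        sum_sq_le_sum_mul_sum_of_sq_le_mul univ (fun y _ => nonneg_of_mem_doublyStochastic hP)
          (fun y _ => mul_nonneg (nonneg_of_mem_doublyStochastic hP) (sq_nonneg _))
          fun y _ => le_of_eq (by ring)
    _ = ∑ y, P x y * (p x - p y) ^ 2 := by rw [sum_row_of_mem_doublyStochastic hP, one_mul]

theorem sum_sq_lazyWalk_mulVec_le (hP : P ∈ doublyStochastic ℝ V) (α : ℝ) (p : V → ℝ) :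
    ∑ x, (lazyWalk α P *ᵥ p) x ^ 2 ≤
      ∑ x, p x ^ 2 - α * (1 - α) * dirichletEnergy P univ p := by
  have hstep (x : V) : (lazyWalk α P *ᵥ p) x = p x - (1 - α) * (p x - (P *ᵥ p) x) := by
    simp only [lazyWalk, add_mulVec, smul_mulVec, one_mulVec, Pi.add_apply, Pi.smul_apply,
      smul_eq_mul]
    ring
  calc ∑ x, (lazyWalk α P *ᵥ p) x ^ 2
      = ∑ x, p x ^ 2 - (1 - α) * (2 * ∑ x, p x * (p x - (P *ᵥ p) x)) +
          (1 - α) ^ 2 * ∑ x, (p x - (P *ᵥ p) x) ^ 2 := by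
        simp only [hstep, mul_sum, ← sum_sub_distrib, ← sum_add_distrib]
        exact sum_congr rfl fun x _ => by ring
    _ ≤ ∑ x, p x ^ 2 - (1 - α) * dirichletEnergy P univ p +
          (1 - α) ^ 2 * dirichletEnergy P univ p := by
        rw [dirichletEnergy_univ_eq hP]
        gcongr
        rw [← dirichletEnergy_univ_eq hP]
        exact sum_sub_mulVec_sq_le_dirichletEnergy hP p
    _ = _ := by ring

variable {ι : Type*} [Fintype ι] {Cl : ι → Finset V}

theorem sum_sum_eq_sum_univ (hdisj : Pairwise (Disjoint on Cl))
    (hcover : univ.biUnion Cl = univ) (f : V → ℝ) : ∑ i, ∑ x ∈ Cl i, f x = ∑ x, f x := by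
  rw [← hcover, sum_biUnion (hdisj.set_pairwise _)]

theorem sum_dirichletEnergy_cluster_le (hP₀ : ∀ x y, 0 ≤ P x y)
    (hdisj : Pairwise (Disjoint on Cl)) (hcover : univ.biUnion Cl = univ) (p : V → ℝ) :
    ∑ i, dirichletEnergy P (Cl i) p ≤ dirichletEnergy P univ p := by
  simp only [dirichletEnergy]
  rw [← sum_sum_eq_sum_univ hdisj hcover]
  exact sum_le_sum fun i _ => sum_le_sum fun x _ =>
    sum_le_univ_sum_of_nonneg fun y => mul_nonneg (hP₀ x y) (sq_nonneg _)

theorem sum_sq_sum_cluster_div_card_le (hdisj : Pairwise (Disjoint on Cl))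
    (hcover : univ.biUnion Cl = univ) (hcard : ∀ i, (#(Cl i) : ℝ)⁻¹ ≤ B)
    (hp : p ∈ stdSimplex ℝ V) : ∑ i, (∑ x ∈ Cl i, p x) ^ 2 / #(Cl i) ≤ B := by
  have hmass : ∑ i, ∑ x ∈ Cl i, p x = 1 := (sum_sum_eq_sum_univ hdisj hcover p).trans hp.2
  have hterm (i : ι) : (∑ x ∈ Cl i, p x) ^ 2 / #(Cl i) ≤ (∑ x ∈ Cl i, p x) * B := by
    have hnonneg : 0 ≤ ∑ x ∈ Cl i, p x := sum_nonneg fun x _ => hp.1 x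
    have hle_one : ∑ x ∈ Cl i, p x ≤ 1 :=
      (sum_le_univ_sum_of_nonneg hp.1).trans hp.2.le
    rw [div_eq_mul_inv]
    exact mul_le_mul (pow_le_of_le_one hnonneg hle_one two_ne_zero) (hcard i) (by positivity)
      hnonneg
  calc ∑ i, (∑ x ∈ Cl i, p x) ^ 2 / #(Cl i) ≤ ∑ i, (∑ x ∈ Cl i, p x) * B :=
        sum_le_sum fun i _ => hterm i
    _ = B := by rw [← sum_mul, hmass, one_mul]

theorem sq_mul_sum_sq_sub_le_dirichletEnergy (hP : P ∈ doublyStochastic ℝ V) (hsymm : P.IsSymm)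
    (hφ : 0 ≤ φ) (hdisj : Pairwise (Disjoint on Cl)) (hcover : univ.biUnion Cl = univ)
    (hexp : ∀ i, HasInnerExpansion P (Cl i) φ) (hcard : ∀ i, (#(Cl i) : ℝ)⁻¹ ≤ B)
    (hp : p ∈ stdSimplex ℝ V) :
    φ ^ 2 * (∑ x, p x ^ 2 - B) ≤ dirichletEnergy P univ p := by
  have hP₀ (x y : V) : 0 ≤ P x y := nonneg_of_mem_doublyStochastic hP
  have hdeg (i : ι) : ∀ x ∈ Cl i, ∑ y ∈ Cl i, P x y ≤ 1 := fun x _ =>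
    (sum_le_univ_sum_of_nonneg (hP₀ x)).trans (sum_row_of_mem_doublyStochastic hP x).le
  calc φ ^ 2 * (∑ x, p x ^ 2 - B)
      ≤ φ ^ 2 * (∑ x, p x ^ 2 - ∑ i, (∑ x ∈ Cl i, p x) ^ 2 / #(Cl i)) := by
        gcongr
        exact sum_sq_sum_cluster_div_card_le hdisj hcover hcard hp
    _ = ∑ i, φ ^ 2 * (∑ x ∈ Cl i, p x ^ 2 - (∑ x ∈ Cl i, p x) ^ 2 / #(Cl i)) := by
        rw [← mul_sum, sum_sub_distrib, sum_sum_eq_sum_univ hdisj hcover]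
    _ ≤ ∑ i, dirichletEnergy P (Cl i) p :=
        sum_le_sum fun i _ => by
          simpa only [one_mul] using
            (hexp i).sq_mul_sum_sq_sub_le_mul_dirichletEnergy hφ hsymm hP₀ (hdeg i) p
    _ ≤ dirichletEnergy P univ p := sum_dirichletEnergy_cluster_le hP₀ hdisj hcover p

theorem mul_one_sub_mul_sq_le_one (hα : α ∈ Set.Icc 0 1) (hφ : φ ∈ Set.Icc 0 1) :
    α * (1 - α) * φ ^ 2 ≤ 1 :=
  mul_le_one₀ (mul_le_one₀ hα.2 (sub_nonneg.2 hα.2) (sub_le_self 1 hα.1)) (sq_nonneg φ)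
    (pow_le_one₀ hφ.1 hφ.2)

theorem sum_sq_lazyWalk_pow_mulVec_sub_le (hP : P ∈ doublyStochastic ℝ V) (hsymm : P.IsSymm)
    (hα : α ∈ Set.Icc 0 1) (hφ : φ ∈ Set.Icc 0 1)
    (hdisj : Pairwise (Disjoint on Cl)) (hcover : univ.biUnion Cl = univ)
    (hexp : ∀ i, HasInnerExpansion P (Cl i) φ) (hcard : ∀ i, (#(Cl i) : ℝ)⁻¹ ≤ B)
    (hp : p ∈ stdSimplex ℝ V) (t : ℕ) :
    ∑ x, ((lazyWalk α P ^ t) *ᵥ p) x ^ 2 - B ≤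
      (1 - α * (1 - α) * φ ^ 2) ^ t * (∑ x, p x ^ 2 - B) := by
  have hα' : 0 ≤ α * (1 - α) := mul_nonneg hα.1 (sub_nonneg.2 hα.2)
  have hrate : 0 ≤ 1 - α * (1 - α) * φ ^ 2 := sub_nonneg.2 (mul_one_sub_mul_sq_le_one hα hφ)
  have hdecay := le_geom (u := fun s => ∑ x, ((lazyWalk α P ^ s) *ᵥ p) x ^ 2 - B) hrate t
  simp only [pow_zero, one_mulVec] at hdecay
  refine hdecay fun s _ => ?_
  have hs : (lazyWalk α P ^ s) *ᵥ p ∈ stdSimplex ℝ V :=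
    mulVec_mem_stdSimplex (pow_mem (lazyWalk_mem_doublyStochastic hP hα) s) hp
  have hstep := sum_sq_lazyWalk_mulVec_le hP α ((lazyWalk α P ^ s) *ᵥ p)
  have henergy := sq_mul_sum_sq_sub_le_dirichletEnergy hP hsymm hφ.1 hdisj hcover hexp hcard hs
  rw [pow_succ', ← mulVec_mulVec]
  linarith [mul_le_mul_of_nonneg_left henergy hα']

theorem inv_card_le_of_biUnion_eq_univ (hcover : univ.biUnion Cl = univ)
    (hcard : ∀ i, (#(Cl i) : ℝ)⁻¹ ≤ B) (x : V) : (Fintype.card V : ℝ)⁻¹ ≤ B := by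
  obtain ⟨i, -, hi⟩ := mem_biUnion.1 (hcover ▸ mem_univ x)
  have hpos : (0 : ℝ) < #(Cl i) := Nat.cast_pos.2 (card_pos.2 ⟨x, hi⟩)
  exact (inv_anti₀ hpos (Nat.cast_le.2 (card_le_univ _))).trans (hcard i)

theorem sum_sq_lazyWalk_pow_mulVec_single_le (hP : P ∈ doublyStochastic ℝ V) (hsymm : P.IsSymm)
    (hα : α ∈ Set.Icc 0 1) (hφ : φ ∈ Set.Icc 0 1) (hdisj : Pairwise (Disjoint on Cl))
    (hcover : univ.biUnion Cl = univ) (hexp : ∀ i, HasInnerExpansion P (Cl i) φ)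
    (hcard : ∀ i, (#(Cl i) : ℝ)⁻¹ ≤ B) {t : ℕ}
    (ht : Real.log (Fintype.card V) ≤ t * (α * (1 - α) * φ ^ 2)) (x : V) :
    ∑ y, ((lazyWalk α P ^ t) *ᵥ Pi.single x 1) y ^ 2 ≤ 2 * B := by
  have hn : (0 : ℝ) < Fintype.card V := Nat.cast_pos.2 (Fintype.card_pos_iff.2 ⟨x⟩)
  have hB := inv_card_le_of_biUnion_eq_univ hcover hcard x
  have hrate : α * (1 - α) * φ ^ 2 ≤ 1 := mul_one_sub_mul_sq_le_one hα hφ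
  have hdecay := sum_sq_lazyWalk_pow_mulVec_sub_le hP hsymm hα hφ hdisj hcover hexp hcard
    (single_mem_stdSimplex ℝ x) t
  have hinit : ∑ y, (Pi.single x 1 : V → ℝ) y ^ 2 = 1 := by simp [Pi.single_apply]
  have hsmall : (1 - α * (1 - α) * φ ^ 2) ^ t * (1 - B) ≤ (Fintype.card V : ℝ)⁻¹ :=
    calc (1 - α * (1 - α) * φ ^ 2) ^ t * (1 - B) ≤ (1 - α * (1 - α) * φ ^ 2) ^ t :=
          mul_le_of_le_one_right (pow_nonneg (sub_nonneg.2 hrate) t)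
            (sub_le_self 1 ((inv_pos.2 hn).le.trans hB))
      _ ≤ (Fintype.card V : ℝ)⁻¹ := one_sub_pow_le_inv hrate hn ht
  rw [hinit] at hdecay
  linarith

end LazyWalk

section RegularGraph

variable {V : Type*} [Fintype V] [DecidableEq V] {G : SimpleGraph V} [DecidableRel G.Adj] {d : ℕ}

theorem inv_smul_adjMatrix_mem_doublyStochastic (hG : G.IsRegularOfDegree d) (hd : d ≠ 0) :
    (d : ℝ)⁻¹ • G.adjMatrix ℝ ∈ doublyStochastic ℝ V := by
  have hrow (x : V) : ∑ y, ((d : ℝ)⁻¹ • G.adjMatrix ℝ) x y = 1 := by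
    simp only [Matrix.smul_apply, smul_eq_mul, ← mul_sum, SimpleGraph.adjMatrix_apply, sum_boole,
      ← G.neighborFinset_eq_filter, G.card_neighborFinset_eq_degree, hG.degree_eq]
    exact inv_mul_cancel₀ (Nat.cast_ne_zero.2 hd)
  refine mem_doublyStochastic_iff_sum.2 ⟨fun x y => ?_, hrow, fun y => ?_⟩
  · rw [Matrix.smul_apply, SimpleGraph.adjMatrix_apply]
    positivity
  · rw [← hrow y]
    exact sum_congr rfl fun x _ => (G.isSymm_adjMatrix.smul _).apply y x

end RegularGraph

theorem hasInnerExpansion_inv_smul_adjMatrix {V : Type} [Fintype V] [DecidableEq V]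
    {G : SimpleGraph V} [DecidableRel G.Adj] {d : ℕ} (hd : 0 < d) {C : Finset V} {φ : ℝ}
    (hC : ∀ S ⊆ C, 0 < #S → (#S : ℝ) ≤ (#C : ℝ) / 2 → φ * (d * #S) ≤ edgeCount G S (C \ S)) :
    HasInnerExpansion ((d : ℝ)⁻¹ • G.adjMatrix ℝ) C φ := by
  intro S hS hcard
  rcases S.eq_empty_or_nonempty with rfl | hne
  · simp
  have hd' : (0 : ℝ) < d := Nat.cast_pos.2 hd
  have hhalf : (#S : ℝ) ≤ #C / 2 := by
    rw [le_div_iff₀' two_pos]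
    exact_mod_cast hcard
  calc φ * #S = (d : ℝ)⁻¹ * (φ * (d * #S)) := by field_simp
    _ ≤ (d : ℝ)⁻¹ * edgeCount G S (C \ S) :=
      mul_le_mul_of_nonneg_left (hC S hS hne.card_pos hhalf) (inv_nonneg.2 hd'.le)
    _ = ∑ x ∈ S, ∑ y ∈ C \ S, ((d : ℝ)⁻¹ • G.adjMatrix ℝ) x y := by
      simp only [edgeCount, Matrix.smul_apply, SimpleGraph.adjMatrix_apply, smul_eq_mul, mul_sum,
        Nat.cast_sum, Nat.cast_ite, Nat.cast_one, Nat.cast_zero]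

theorem three_quarters_smul_one_add_eq_lazyWalk {V : Type*} [DecidableEq V]
    (A : Matrix V V ℝ) (d : ℝ) :
    (3 / 4 : ℝ) • (1 : Matrix V V ℝ) + (1 / (4 * d)) • A = lazyWalk (3 / 4) (d⁻¹ • A) := by
  rw [lazyWalk, smul_smul]
  congr 2
  ring

/-- In a `d`-regular graph partitioned into clusters of inner conductance
at least `φ` and size at least `n/(ηk)`, for `t ≥ 10 log n / φ²` the `t`-step distribution of
the `3/4`-lazy random walk `M̃ = (3/4)I + (1/(4d))A` started at any vertex has Euclidean
norm at most `C √(ηk/n)`. -/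
theorem stmt_2 :
    ∃ C : ℝ, 0 < C ∧
    ∀ (V : Type) [Fintype V] [DecidableEq V] (G : SimpleGraph V) [DecidableRel G.Adj]
      (d k n : ℕ) (φ η : ℝ) (Cl : Fin k → Finset V),
      n = Fintype.card V → 2 ≤ n → 1 ≤ d →
      G.IsRegularOfDegree d →
      φ ∈ Set.Ioo (0:ℝ) 1 → 1 ≤ η →
      (∀ i, (Cl i).Nonempty) →
      (∀ i j, i ≠ j → Disjoint (Cl i) (Cl j)) →
      (Finset.univ.biUnion Cl = Finset.univ) →
      (∀ i, (n : ℝ) / (η * k) ≤ ((Cl i).card : ℝ)) →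
      (∀ i, ∀ S ⊆ Cl i, 0 < S.card → (S.card : ℝ) ≤ ((Cl i).card : ℝ) / 2 →
        φ * (d * S.card) ≤ (edgeCount G S (Cl i \ S) : ℝ)) →
      ∀ t : ℕ, 10 * Real.log n / φ ^ 2 ≤ (t : ℝ) →
      ∀ x : V,
        Real.sqrt (∑ y : V,
            (Matrix.mulVec
              (((3/4 : ℝ) • (1 : Matrix V V ℝ) + (1/(4 * (d:ℝ))) • G.adjMatrix ℝ) ^ t)
              (Pi.single x 1) y) ^ 2)
          ≤ C * Real.sqrt (η * k / n) := by
  refine ⟨√2, by positivity, ?_⟩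
  rintro V _ _ G _ d k n φ η Cl rfl hn hd hG ⟨hφ₀, hφ₁⟩ hη - hdisj hcover hsize hcond t ht x
  have hn₀ : (0 : ℝ) < Fintype.card V := Nat.cast_pos.2 (by lia)
  have hinv (i : Fin k) : (#(Cl i) : ℝ)⁻¹ ≤ η * k / Fintype.card V := by
    have hk : (0 : ℝ) < k := Nat.cast_pos.2 i.pos
    rw [← inv_div]
    exact inv_anti₀ (div_pos hn₀ (by positivity)) (hsize i)
  have htime : Real.log (Fintype.card V) ≤ t * (3 / 4 * (1 - 3 / 4) * φ ^ 2) := by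
    have hlog : 0 ≤ Real.log (Fintype.card V) := Real.log_natCast_nonneg _
    linarith [(div_le_iff₀ (by positivity)).1 ht]
  rw [three_quarters_smul_one_add_eq_lazyWalk, ← Real.sqrt_mul zero_le_two]
  exact Real.sqrt_le_sqrt <| sum_sq_lazyWalk_pow_mulVec_single_le
    (inv_smul_adjMatrix_mem_doublyStochastic hG (by lia)) (G.isSymm_adjMatrix.smul _)
    (by norm_num) ⟨hφ₀.le, hφ₁.le⟩ (fun i j => hdisj i j) hcover
    (fun i => hasInnerExpansion_inv_smul_adjMatrix hd (hcond i)) hinv htime x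
end

section
/- Let V and S be nonempty finite sets, let p be a probability mass function on V, and for each y ∈ S let p_y be a probability mass function on V; set p_S := (1/|S|)·Σ_{y∈S} p_y. Let σ : S → {−1,1} be a sign assignment, and let n, k, β, γ > 0 be reals such that: (1) Σ_{v∈V} p(v)·p_S(v) ≤ β·k/(n·|S|); and (2) Σ_{v∈V} p(v)·p_S(v)² ≤ γ·k²/(n²·|S|²) and Σ_{v∈V} p(v)²·p_S(v) ≤ γ·k²/(n²·|S|). Let Q and R be positive integers, let W¹, …, W^Q be i.i.d. samples from p, and for each y ∈ S let W_y¹, …, W_y^R be i.i.d. samples from p_y, with all of these sample families mutually independent. Define the empirical distributions p̂(v) := (1/Q)·#{q ∈ [Q] : W^q = v} and p̂_y(v) := (1/R)·#{r ∈ [R] : W_y^r = v}, and set Z := Σ_{v∈V} p̂(v)·Σ_{y∈S} σ(y)·p̂_y(v). Then for all reals ρ > 0 and ξ > 0, if Q·R ≥ (7β/(ρ·ξ²))·(n/k) and Q ≥ 7(γ+β²)/(ρ·ξ²) and R ≥ 7(γ+β²)/(ρ·ξ²), then with probability at least 1 − ρ over the random samples, |Z − Σ_{v∈V} p(v)·Σ_{y∈S}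 σ(y)·p_y(v)| ≤ ξ·k/n. -/
open Finset
open scoped Classical

/-!
Condition on the first sample `x`. The signed statistic is then a sum of independent sample means
of the function `v ↦ p̂(v)`, so its conditional mean is `∑ v, p̂(v) g(v)` with
`g = ∑ y, σ(y) p_y`, and its conditional variance is at most `R⁻¹ ∑ v, P(v) p̂(v)²` with
`P = ∑ y, p_y`. By the law of total variance,
`Var Z ≤ Q⁻¹ ∑ p g² + R⁻¹ ∑ P 𝔼[p̂²]`; since `|g| ≤ P` and `𝔼[p̂²] ≤ p² + Q⁻¹ p`, this is at most
`Q⁻¹ ∑ p P² + R⁻¹ ∑ p² P + (QR)⁻¹ ∑ p P`. The sample sizes make each of the three terms at most a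
third of `ρ (ξ k / n)²`, and Chebyshev's inequality concludes.
-/

open MeasureTheory ProbabilityTheory

section Real

theorem sq_sum_mul_le_sq_sum {α : Type*} [Fintype α] {σ a : α → ℝ} (hσ : ∀ y, |σ y| ≤ 1)
    (ha : ∀ y, 0 ≤ a y) : (∑ y, σ y * a y) ^ 2 ≤ (∑ y, a y) ^ 2 := by
  have habs : |∑ y, σ y * a y| ≤ ∑ y, a y :=
    calc |∑ y, σ y * a y| ≤ ∑ y, |σ y| * a y := by
          simpa only [abs_mul, abs_of_nonneg (ha _)] using
            abs_sum_le_sum_abs (fun y => σ y * a y) univ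
      _ ≤ ∑ y, a y := sum_le_sum fun y _ => mul_le_of_le_one_left (ha y) (hσ y)
  exact sq_le_sq.2 (habs.trans (le_abs_self _))

theorem inv_mul_add_inv_mul_add_inv_mul_le {Q R A B C ε : ℝ} (hQ : 0 < Q) (hR : 0 < R)
    (hε : 0 < ε) (hA : 3 * A / ε ≤ Q) (hB : 3 * B / ε ≤ R) (hC : 3 * C / ε ≤ Q * R) :
    Q⁻¹ * A + R⁻¹ * B + (Q * R)⁻¹ * C ≤ ε := by
  have third {N D : ℝ} (hN : 0 < N) (h : 3 * D / ε ≤ N) : N⁻¹ * D ≤ ε / 3 := by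
    rw [div_le_iff₀ hε] at h
    rw [inv_mul_le_iff₀ hN]
    linarith
  linarith [third hQ hA, third hR hB, third (mul_pos hQ hR) hC]

end Real

section Probability

variable {Ω Ω' : Type*} [MeasurableSpace Ω] [MeasurableSpace Ω']

theorem variance_prod_eq_integral_variance_add_variance_integral
    {μ : Measure Ω} {ν : Measure Ω'} [IsProbabilityMeasure μ] [IsProbabilityMeasure ν]
    {X : Ω × Ω' → ℝ} (hX : MemLp X 2 (μ.prod ν)) :
    Var[X; μ.prod ν]
      = ∫ x, Var[fun y => X (x, y); ν] ∂μ + Var[fun x => ∫ y, X (x, y) ∂ν; μ] := by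
  have hsq : Integrable (fun z => X z ^ 2) (μ.prod ν) := hX.integrable_sq
  have section_memLp : ∀ᵐ x ∂μ, MemLp (fun y => X (x, y)) 2 ν := by
    filter_upwards [hX.aestronglyMeasurable.prodMk_left, hsq.prod_right_ae] with x hmeas hint
    exact (memLp_two_iff_integrable_sq hmeas).2 hint
  have section_variance : ∀ᵐ x ∂μ,
      Var[fun y => X (x, y); ν] = ∫ y, X (x, y) ^ 2 ∂ν - (∫ y, X (x, y) ∂ν) ^ 2 := by
    filter_upwards [section_memLp] with x hx using variance_eq_sub hx
  have hmean : AEStronglyMeasurable (fun x => ∫ y, X (x, y) ∂ν) μ :=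
    hX.aestronglyMeasurable.integral_prod_right'
  have hmean_sq : Integrable (fun x => (∫ y, X (x, y) ∂ν) ^ 2) μ := by
    refine hsq.integral_prod_left.mono' (hmean.pow 2) ?_
    filter_upwards [section_variance] with x hx
    rw [Real.norm_of_nonneg (sq_nonneg _)]
    linarith [variance_nonneg (fun y => X (x, y)) ν]
  rw [integral_congr_ae section_variance, integral_sub hsq.integral_prod_left hmean_sq,
    variance_eq_sub hX, variance_eq_sub ((memLp_two_iff_integrable_sq hmean).2 hmean_sq),
    integral_prod X (hX.integrable one_le_two)]
  simp only [Pi.pow_apply]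
  rw [integral_prod (fun z => X z ^ 2) hsq]
  ring

theorem one_sub_le_measureReal_abs_sub_integral_le {μ : Measure Ω} [IsProbabilityMeasure μ]
    {X : Ω → ℝ} (hX : MemLp X 2 μ) {t ρ : ℝ} (ht : 0 < t) (hvar : Var[X; μ] ≤ ρ * t ^ 2) :
    1 - ρ ≤ μ.real {ω | |X ω - μ[X]| ≤ t} := by
  have htail : μ.real {ω | t ≤ |X ω - μ[X]|} ≤ ρ :=
    calc μ.real {ω | t ≤ |X ω - μ[X]|} ≤ Var[X; μ] / t ^ 2 :=
          ENNReal.toReal_le_of_le_ofReal (div_nonneg (variance_nonneg X μ) (sq_nonneg t))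
            (meas_ge_le_variance_div_sq hX ht)
      _ ≤ ρ := (div_le_iff₀ (by positivity)).2 hvar
  have hcover : {ω | |X ω - μ[X]| ≤ t} ∪ {ω | t ≤ |X ω - μ[X]|} = Set.univ :=
    Set.eq_univ_of_forall fun ω => le_total |X ω - ∫ ω, X ω ∂μ| t
  have hunion := measureReal_union_le (μ := μ)
    {ω | |X ω - μ[X]| ≤ t} {ω | t ≤ |X ω - μ[X]|}
  rw [hcover, probReal_univ] at hunion
  linarith

theorem measureReal_setOf_eq_sum_ite_mul [Fintype Ω] [MeasurableSingletonClass Ω]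
    (μ : Measure Ω) [IsFiniteMeasure μ] (P : Ω → Prop) [DecidablePred P] :
    μ.real {ω | P ω} = ∑ ω, (if P ω then 1 else 0) * μ.real {ω} := by
  simp only [ite_mul, one_mul, zero_mul, ← sum_filter, sum_measureReal_singleton, coe_filter,
    mem_univ, true_and]

theorem exists_isProbabilityMeasure_real_singleton_eq [Fintype Ω] [MeasurableSingletonClass Ω]
    {p : Ω → ℝ} (hp0 : ∀ ω, 0 ≤ p ω) (hp1 : ∑ ω, p ω = 1) :
    ∃ μ : Measure Ω, IsProbabilityMeasure μ ∧ ∀ ω, μ.real {ω} = p ω := by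
  have hsum : ∑ ω, ENNReal.ofReal (p ω) = 1 := by
    rw [← ENNReal.ofReal_sum_of_nonneg fun ω _ => hp0 ω, hp1, ENNReal.ofReal_one]
  refine ⟨(PMF.ofFintype _ hsum).toMeasure, inferInstance, fun ω => ?_⟩
  rw [measureReal_def, PMF.toMeasure_apply_singleton _ _ (measurableSet_singleton ω),
    PMF.ofFintype_apply, ENNReal.toReal_ofReal (hp0 ω)]

theorem memLp_two_indicator_singleton [MeasurableSingletonClass Ω] (μ : Measure Ω)
    [IsFiniteMeasure μ] (ω : Ω) : MemLp (Set.indicator {ω} (1 : Ω → ℝ)) 2 μ :=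
  memLp_indicator_const 2 (measurableSet_singleton ω) 1 (.inr (measure_ne_top μ _))

end Probability

section SampleMean

variable {ι V : Type*} [Fintype ι] [MeasurableSpace V] {μ : Measure V} [IsProbabilityMeasure μ]
  {f : V → ℝ}

theorem integral_sampleMean [Nonempty ι] (hf : Integrable f μ) :
    ∫ x, (Fintype.card ι : ℝ)⁻¹ * ∑ i, f (x i) ∂Measure.pi (fun _ : ι => μ) = ∫ v, f v ∂μ := by
  rw [integral_const_mul, integral_finsetSum _ fun i _ => integrable_comp_eval hf]
  have heval (i : ι) : ∫ x, f (x i) ∂Measure.pi (fun _ : ι => μ) = ∫ v, f v ∂μ :=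
    integral_comp_eval hf.aestronglyMeasurable
  simp [heval]

theorem variance_sampleMean (hf : MemLp f 2 μ) :
    Var[fun x => (Fintype.card ι : ℝ)⁻¹ * ∑ i, f (x i); Measure.pi (fun _ : ι => μ)]
      = (Fintype.card ι : ℝ)⁻¹ * Var[f; μ] := by
  have hsum := variance_sum_pi (μ := fun _ : ι => μ) (X := fun _ => f) fun _ => hf
  simp only [sum_fn, sum_const, card_univ, nsmul_eq_mul] at hsum
  rw [variance_const_mul, hsum]
  rcases eq_or_ne (Fintype.card ι : ℝ) 0 with h0 | h0
  · simp [h0]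
  · field_simp

end SampleMean

section EmpiricalFreq

variable {ι V : Type*} [Fintype ι] [DecidableEq V]

/-- The empirical distribution of a sample `x : ι → V`: the proportion of the indices `i` with
`x i = v`. It is identically `0` for the empty sample. -/
noncomputable def empiricalFreq (x : ι → V) (v : V) : ℝ :=
  (Fintype.card ι : ℝ)⁻¹ * #{i | x i = v}

theorem sum_empiricalFreq_mul [Fintype V] (x : ι → V) (f : V → ℝ) :
    ∑ v, empiricalFreq x v * f v = (Fintype.card ι : ℝ)⁻¹ * ∑ i, f (x i) := by
  simp only [empiricalFreq, mul_assoc, ← mul_sum, natCast_card_filter, sum_mul, ite_mul, one_mul,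
    zero_mul]
  rw [sum_comm]
  simp

theorem empiricalFreq_eq_sampleMean_indicator (x : ι → V) (v : V) :
    empiricalFreq x v = (Fintype.card ι : ℝ)⁻¹ * ∑ i, Set.indicator {v} 1 (x i) := by
  simp [empiricalFreq, Set.indicator_apply]

variable [MeasurableSpace V] [MeasurableSingletonClass V] (μ : Measure V) [IsProbabilityMeasure μ]

theorem integral_empiricalFreq [Nonempty ι] (v : V) :
    ∫ x, empiricalFreq x v ∂Measure.pi (fun _ : ι => μ) = μ.real {v} := by
  simp only [empiricalFreq_eq_sampleMean_indicator]
  rw [integral_sampleMean ((memLp_two_indicator_singleton μ v).integrable one_le_two),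
    integral_indicator_one (measurableSet_singleton v)]

theorem variance_empiricalFreq_le (v : V) :
    Var[fun x => empiricalFreq x v; Measure.pi (fun _ : ι => μ)]
      ≤ (Fintype.card ι : ℝ)⁻¹ * μ.real {v} := by
  have hsq : (Set.indicator {v} (1 : V → ℝ)) ^ 2 = Set.indicator {v} 1 := by
    ext u
    by_cases hu : u = v <;> simp [hu]
  have hind := variance_le_expectation_sq (memLp_two_indicator_singleton μ v).aestronglyMeasurable
  rw [hsq, integral_indicator_one (measurableSet_singleton v)] at hind
  simp only [empiricalFreq_eq_sampleMean_indicator]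
  rw [variance_sampleMean (memLp_two_indicator_singleton μ v)]
  gcongr

theorem integral_empiricalFreq_sq_le [Finite V] [Nonempty ι] (v : V) :
    ∫ x, empiricalFreq x v ^ 2 ∂Measure.pi (fun _ : ι => μ)
      ≤ μ.real {v} ^ 2 + (Fintype.card ι : ℝ)⁻¹ * μ.real {v} := by
  have hvar := variance_eq_sub (μ := Measure.pi fun _ : ι => μ) (X := fun x => empiricalFreq x v)
    .of_discrete
  rw [integral_empiricalFreq] at hvar
  simp only [Pi.pow_apply] at hvar
  linarith [variance_empiricalFreq_le (ι := ι) μ v]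

end EmpiricalFreq

section SampleLaw

variable {S V : Type*} [Fintype S] [MeasurableSpace V]

/-- The joint law of independent samples: `ι`-many points drawn from `μ` and, for each `y : S`,
`κ`-many points drawn from `ν y`. -/
noncomputable abbrev sampleLaw (ι κ : Type*) [Fintype ι] [Fintype κ] (μ : Measure V)
    (ν : S → Measure V) : Measure ((ι → V) × (S → κ → V)) :=
  (Measure.pi fun _ : ι => μ).prod (Measure.pi fun y => Measure.pi fun _ : κ => ν y)

theorem sampleLaw_real_singleton {ι κ : Type*} [Fintype ι] [Fintype κ] (μ : Measure V)
    [SigmaFinite μ] (ν : S → Measure V) [∀ y, SigmaFinite (ν y)] (ω : (ι → V) × (S → κ → V)) :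
    (sampleLaw ι κ μ ν).real {ω}
      = (∏ i, μ.real {ω.1 i}) * ∏ y, ∏ r, (ν y).real {ω.2 y r} := by
  rw [← Set.singleton_prod_singleton, measureReal_prod_prod]
  simp only [measureReal_def, Measure.pi_singleton, ENNReal.toReal_prod]

end SampleLaw

section CollisionStat

variable {ι κ S V : Type*} [Fintype ι] [Fintype κ] [Fintype S] [Fintype V] [DecidableEq V]

/-- The signed collision statistic `Z = ∑ v, p̂(v) ∑ y, σ(y) p̂_y(v)` of a sample `x` and a family
of samples `x'` indexed by `S`. -/
noncomputable def collisionStat (σ : S → ℝ) (x : ι → V) (x' : S → κ → V) : ℝ :=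
  ∑ v, empiricalFreq x v * ∑ y, σ y * empiricalFreq (x' y) v

theorem collisionStat_eq_sum_sampleMean (σ : S → ℝ) (x : ι → V) (x' : S → κ → V) :
    collisionStat σ x x'
      = ∑ y, σ y * ((Fintype.card κ : ℝ)⁻¹ * ∑ r, empiricalFreq x (x' y r)) := by
  simp only [collisionStat, ← sum_empiricalFreq_mul (f := empiricalFreq x)]
  simp only [mul_sum]
  rw [sum_comm]
  exact sum_congr rfl fun y _ => sum_congr rfl fun v _ => by ring

variable [MeasurableSpace V] [MeasurableSingletonClass V]
  {μ : Measure V} [IsProbabilityMeasure μ] {ν : S → Measure V} [∀ y, IsProbabilityMeasure (ν y)]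
  {σ : S → ℝ}

theorem integral_collisionStat_right [Nonempty κ] (x : ι → V) :
    ∫ x', collisionStat σ x x' ∂Measure.pi (fun y => Measure.pi fun _ : κ => ν y)
      = ∑ v, empiricalFreq x v * ∑ y, σ y * (ν y).real {v} := by
  have heval (v : V) (y : S) :
      ∫ x', empiricalFreq (x' y) v ∂Measure.pi (fun y => Measure.pi fun _ : κ => ν y)
        = (ν y).real {v} := by
    rw [integral_comp_eval (X := fun _ => κ → V) (f := fun z => empiricalFreq z v) .of_discrete,
      integral_empiricalFreq]
  simp only [collisionStat]
  rw [integral_finsetSum _ fun _ _ => .of_finite]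
  refine sum_congr rfl fun v _ => ?_
  rw [integral_const_mul, integral_finsetSum _ fun _ _ => .of_finite]
  simp only [integral_const_mul, heval]

theorem integral_collisionStat [Nonempty ι] [Nonempty κ] :
    ∫ ω, collisionStat σ ω.1 ω.2 ∂sampleLaw ι κ μ ν
      = ∑ v, μ.real {v} * ∑ y, σ y * (ν y).real {v} := by
  rw [integral_prod _ .of_finite]
  simp only [integral_collisionStat_right]
  rw [integral_finsetSum _ fun _ _ => .of_finite]
  simp only [integral_mul_const, integral_empiricalFreq]

theorem variance_collisionStat_right_le (hσ : ∀ y, |σ y| ≤ 1) (x : ι → V) :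
    Var[fun x' => collisionStat σ x x'; Measure.pi (fun y => Measure.pi fun _ : κ => ν y)]
      ≤ (Fintype.card κ : ℝ)⁻¹ * ∑ v, empiricalFreq x v ^ 2 * ∑ y, (ν y).real {v} := by
  have hvar := variance_sum_pi (μ := fun y => Measure.pi fun _ : κ => ν y)
    (X := fun y z => σ y * ((Fintype.card κ : ℝ)⁻¹ * ∑ r, empiricalFreq x (z r)))
    fun _ => .of_discrete
  simp only [sum_fn, variance_const_mul _ (fun _ : κ → V => _ * _),
    variance_sampleMean (MemLp.of_discrete (f := empiricalFreq x))] at hvar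
  simp only [collisionStat_eq_sum_sampleMean]
  rw [hvar]
  calc ∑ y, σ y ^ 2 * ((Fintype.card κ : ℝ)⁻¹ * Var[empiricalFreq x; ν y])
      ≤ ∑ y, (Fintype.card κ : ℝ)⁻¹ * ∑ v, (ν y).real {v} * empiricalFreq x v ^ 2 := by
        refine sum_le_sum fun y _ => ?_
        have hsecond := variance_le_expectation_sq (μ := ν y) (X := empiricalFreq x) .of_discrete
        rw [integral_fintype .of_finite] at hsecond
        refine (mul_le_of_le_one_left (mul_nonneg (by positivity) (variance_nonneg _ _))
          ((sq_le_one_iff_abs_le_one _).2 (hσ y))).trans ?_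
        gcongr
        exact hsecond
    _ = (Fintype.card κ : ℝ)⁻¹ * ∑ v, empiricalFreq x v ^ 2 * ∑ y, (ν y).real {v} := by
        rw [← mul_sum, sum_comm]
        simp only [mul_sum, mul_comm]

theorem variance_integral_collisionStat_right_le [Nonempty κ] (hσ : ∀ y, |σ y| ≤ 1) :
    Var[fun x => ∫ x', collisionStat σ x x' ∂Measure.pi (fun y => Measure.pi fun _ : κ => ν y);
        Measure.pi (fun _ : ι => μ)]
      ≤ (Fintype.card ι : ℝ)⁻¹ * ∑ v, μ.real {v} * (∑ y, (ν y).real {v}) ^ 2 := by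
  simp only [integral_collisionStat_right, sum_empiricalFreq_mul]
  rw [variance_sampleMean (f := fun v => ∑ y, σ y * (ν y).real {v}) .of_discrete]
  gcongr
  refine (variance_le_expectation_sq .of_discrete).trans ?_
  rw [integral_fintype .of_finite]
  refine sum_le_sum fun v _ => mul_le_mul_of_nonneg_left ?_ measureReal_nonneg
  exact sq_sum_mul_le_sq_sum hσ fun y => measureReal_nonneg

theorem integral_variance_collisionStat_right_le [Nonempty ι] (hσ : ∀ y, |σ y| ≤ 1) :
    ∫ x, Var[fun x' => collisionStat σ x x'; Measure.pi (fun y => Measure.pi fun _ : κ => ν y)]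
        ∂Measure.pi (fun _ : ι => μ)
      ≤ (Fintype.card κ : ℝ)⁻¹ * ∑ v, (μ.real {v} ^ 2 + (Fintype.card ι : ℝ)⁻¹ * μ.real {v}) *
          ∑ y, (ν y).real {v} := by
  refine (integral_mono .of_finite .of_finite fun x =>
    variance_collisionStat_right_le hσ x).trans ?_
  rw [integral_const_mul, integral_finsetSum _ fun _ _ => .of_finite]
  simp only [integral_mul_const]
  gcongr with v
  exact integral_empiricalFreq_sq_le μ v

theorem variance_collisionStat_le [Nonempty ι] [Nonempty κ] (hσ : ∀ y, |σ y| ≤ 1) :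
    Var[fun ω => collisionStat σ ω.1 ω.2; sampleLaw ι κ μ ν]
      ≤ (Fintype.card ι : ℝ)⁻¹ * ∑ v, μ.real {v} * (∑ y, (ν y).real {v}) ^ 2
        + (Fintype.card κ : ℝ)⁻¹ * ∑ v, μ.real {v} ^ 2 * ∑ y, (ν y).real {v}
        + ((Fintype.card ι : ℝ) * Fintype.card κ)⁻¹ * ∑ v, μ.real {v} * ∑ y, (ν y).real {v} := by
  rw [variance_prod_eq_integral_variance_add_variance_integral .of_discrete]
  refine (add_le_add (integral_variance_collisionStat_right_le hσ)
    (variance_integral_collisionStat_right_le hσ)).trans_eq ?_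
  simp only [add_mul, sum_add_distrib, mul_assoc, ← mul_sum, mul_inv]
  ring

theorem one_sub_le_sampleLaw_real_abs_collisionStat_sub_le [Nonempty ι] [Nonempty κ]
    (hσ : ∀ y, |σ y| ≤ 1) {t ρ A B C : ℝ} (ht : 0 < t) (hρ : 0 < ρ)
    (hA : ∑ v, μ.real {v} * (∑ y, (ν y).real {v}) ^ 2 ≤ A)
    (hB : ∑ v, μ.real {v} ^ 2 * ∑ y, (ν y).real {v} ≤ B)
    (hC : ∑ v, μ.real {v} * ∑ y, (ν y).real {v} ≤ C)
    (hι : 3 * A / (ρ * t ^ 2) ≤ Fintype.card ι) (hκ : 3 * B / (ρ * t ^ 2) ≤ Fintype.card κ)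
    (hικ : 3 * C / (ρ * t ^ 2) ≤ (Fintype.card ι : ℝ) * Fintype.card κ) :
    1 - ρ ≤ (sampleLaw ι κ μ ν).real
      {ω | |collisionStat σ ω.1 ω.2 - ∑ v, μ.real {v} * ∑ y, σ y * (ν y).real {v}| ≤ t} := by
  have hvar : Var[fun ω => collisionStat σ ω.1 ω.2; sampleLaw ι κ μ ν] ≤ ρ * t ^ 2 :=
    calc _ ≤ _ := variance_collisionStat_le hσ
      _ ≤ (Fintype.card ι : ℝ)⁻¹ * A + (Fintype.card κ : ℝ)⁻¹ * B
            + ((Fintype.card ι : ℝ) * Fintype.card κ)⁻¹ * C := by gcongr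
      _ ≤ ρ * t ^ 2 := inv_mul_add_inv_mul_add_inv_mul_le (mod_cast Fintype.card_pos)
          (mod_cast Fintype.card_pos) (by positivity) hι hκ hικ
  have hprob := one_sub_le_measureReal_abs_sub_integral_le .of_discrete ht hvar
  rwa [integral_collisionStat] at hprob

end CollisionStat

theorem stmt_4_general {V S : Type*} [Fintype V] [DecidableEq V] [Fintype S] [DecidableEq S]
    [Nonempty S]
    {p : V → ℝ} (hp0 : ∀ v, 0 ≤ p v) (hp1 : ∑ v, p v = 1)
    {py : S → V → ℝ} (hpy0 : ∀ y v, 0 ≤ py y v) (hpy1 : ∀ y, ∑ v, py y v = 1)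
    {pS : V → ℝ} (hpS : ∀ v, pS v = (Fintype.card S : ℝ)⁻¹ * ∑ y, py y v)
    {σ : S → ℝ} (hσ : ∀ y, |σ y| ≤ 1)
    {n k β γ : ℝ} (hn : 0 < n) (hk : 0 < k)
    (h1 : ∑ v, p v * pS v ≤ β * k / (n * Fintype.card S))
    (h2a : ∑ v, p v * pS v ^ 2 ≤ γ * k ^ 2 / (n ^ 2 * (Fintype.card S : ℝ) ^ 2))
    (h2b : ∑ v, p v ^ 2 * pS v ≤ γ * k ^ 2 / (n ^ 2 * Fintype.card S))
    {Q R : ℕ} (hQ : 0 < Q) (hR : 0 < R)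
    {ρ ξ : ℝ} (hρ : 0 < ρ) (hξ : 0 < ξ)
    (hQR : 3 * β / (ρ * ξ ^ 2) * (n / k) ≤ (Q : ℝ) * R)
    (hQ' : 3 * γ / (ρ * ξ ^ 2) ≤ (Q : ℝ))
    (hR' : 3 * γ / (ρ * ξ ^ 2) ≤ (R : ℝ)) :
    1 - ρ ≤
      ∑ ω : (Fin Q → V) × (S → Fin R → V),
        (if
            |(∑ v, ((Q : ℝ)⁻¹ * ((Finset.univ.filter (fun q => ω.1 q = v)).card : ℝ)) *
                ∑ y, σ y * ((R : ℝ)⁻¹ * ((Finset.univ.filter (fun r => ω.2 y r = v)).card : ℝ)))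
              - ∑ v, p v * ∑ y, σ y * py y v| ≤ ξ * k / n
          then (1:ℝ) else 0) *
        ((∏ q, p (ω.1 q)) * ∏ y, ∏ r, py y (ω.2 y r)) := by
  let _ : MeasurableSpace V := ⊤
  have : NeZero Q := ⟨hQ.ne'⟩
  have : NeZero R := ⟨hR.ne'⟩
  obtain ⟨μ, _, hμ⟩ := exists_isProbabilityMeasure_real_singleton_eq hp0 hp1
  choose ν _ hν using fun y => exists_isProbabilityMeasure_real_singleton_eq (hpy0 y) (hpy1 y)
  have hs : (0 : ℝ) < Fintype.card S := by exact_mod_cast Fintype.card_pos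
  have hpy (v : V) : ∑ y, py y v = Fintype.card S * pS v := by rw [hpS]; field_simp
  have hcoll : ∑ v, p v * ∑ y, py y v ≤ β * k / n := by
    rw [← div_div, le_div_iff₀' hs, mul_sum] at h1
    simpa only [hpy, mul_left_comm] using h1
  have hcoll_right_sq : ∑ v, p v * (∑ y, py y v) ^ 2 ≤ γ * k ^ 2 / n ^ 2 := by
    rw [← div_div, le_div_iff₀' (by positivity), mul_sum] at h2a
    simpa only [hpy, mul_pow, mul_left_comm] using h2a
  have hcoll_left_sq : ∑ v, p v ^ 2 * ∑ y, py y v ≤ γ * k ^ 2 / n ^ 2 := by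
    rw [← div_div, le_div_iff₀' hs, mul_sum] at h2b
    simpa only [hpy, mul_left_comm] using h2b
  have hγ : 3 * (γ * k ^ 2 / n ^ 2) / (ρ * (ξ * k / n) ^ 2) = 3 * γ / (ρ * ξ ^ 2) := by
    field_simp
  have hβ : 3 * (β * k / n) / (ρ * (ξ * k / n) ^ 2) = 3 * β / (ρ * ξ ^ 2) * (n / k) := by
    field_simp
  have hprob := one_sub_le_sampleLaw_real_abs_collisionStat_sub_le
    (ι := Fin Q) (κ := Fin R) (μ := μ) (ν := ν) (t := ξ * k / n) hσ (by positivity) hρ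
    (by simpa only [hμ, hν] using hcoll_right_sq) (by simpa only [hμ, hν] using hcoll_left_sq)
    (by simpa only [hμ, hν] using hcoll) (by simpa only [Fintype.card_fin] using hγ.trans_le hQ')
    (by simpa only [Fintype.card_fin] using hγ.trans_le hR')
    (by simpa only [Fintype.card_fin] using hβ.trans_le hQR)
  rw [measureReal_setOf_eq_sum_ite_mul] at hprob
  simpa only [sampleLaw_real_singleton, hμ, hν, collisionStat, empiricalFreq, Fintype.card_fin]
    using hprob

/-- Collision-counting: the signed empirical collision statistic `Z`
approximates `⟨p, ∑_y σ(y) p_y⟩` with probability at least `1 - ρ`, where the probability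
of an event is the sum, over all outcomes of the independent samples, of the product of
the probabilities of the individual samples. -/
theorem stmt_4
    (V S : Type) [Fintype V] [DecidableEq V] [Fintype S] [DecidableEq S]
    [Nonempty V] [Nonempty S]
    (p : V → ℝ) (hp0 : ∀ v, 0 ≤ p v) (hp1 : ∑ v, p v = 1)
    (py : S → V → ℝ) (hpy0 : ∀ y v, 0 ≤ py y v) (hpy1 : ∀ y, ∑ v, py y v = 1)
    (pS : V → ℝ) (hpS : ∀ v, pS v = (Fintype.card S : ℝ)⁻¹ * ∑ y, py y v)
    (σ : S → ℝ) (hσ : ∀ y, σ y = 1 ∨ σ y = -1)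
    (n k β γ : ℝ) (hn : 0 < n) (hk : 0 < k) (hβ : 0 < β) (hγ : 0 < γ)
    (h1 : ∑ v, p v * pS v ≤ β * k / (n * Fintype.card S))
    (h2a : ∑ v, p v * pS v ^ 2 ≤ γ * k ^ 2 / (n ^ 2 * (Fintype.card S : ℝ) ^ 2))
    (h2b : ∑ v, p v ^ 2 * pS v ≤ γ * k ^ 2 / (n ^ 2 * Fintype.card S))
    (Q R : ℕ) (hQ : 0 < Q) (hR : 0 < R)
    (ρ ξ : ℝ) (hρ : 0 < ρ) (hξ : 0 < ξ)
    (hQR : 7 * β / (ρ * ξ ^ 2) * (n / k) ≤ (Q : ℝ) * R)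
    (hQ' : 7 * (γ + β ^ 2) / (ρ * ξ ^ 2) ≤ (Q : ℝ))
    (hR' : 7 * (γ + β ^ 2) / (ρ * ξ ^ 2) ≤ (R : ℝ)) :
    1 - ρ ≤
      ∑ ω : (Fin Q → V) × (S → Fin R → V),
        (if
            |(∑ v, ((Q : ℝ)⁻¹ * ((Finset.univ.filter (fun q => ω.1 q = v)).card : ℝ)) *
                ∑ y, σ y * ((R : ℝ)⁻¹ * ((Finset.univ.filter (fun r => ω.2 y r = v)).card : ℝ)))
              - ∑ v, p v * ∑ y, σ y * py y v| ≤ ξ * k / n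
          then (1:ℝ) else 0) *
        ((∏ q, p (ω.1 q)) * ∏ y, ∏ r, py y (ω.2 y r)) := by
  have hσ' (y : S) : |σ y| ≤ 1 := by rcases hσ y with h | h <;> simp [h]
  have hγ' : 3 * γ / (ρ * ξ ^ 2) ≤ 7 * (γ + β ^ 2) / (ρ * ξ ^ 2) := by
    gcongr ?_ / _
    linarith [sq_nonneg β]
  have hβ' : 3 * β / (ρ * ξ ^ 2) * (n / k) ≤ 7 * β / (ρ * ξ ^ 2) * (n / k) := by
    gcongr
    norm_num
  exact stmt_4_general hp0 hp1 hpy0 hpy1 hpS hσ' hn hk h1 h2a h2b hQ hR hρ hξ (hβ'.trans hQR)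
    (hγ'.trans hQ') (hγ'.trans hR')
end

section
/- For every real ε ∈ (0,1), every integer t ≥ 1, and every real x ∈ [−1,1], the series Σ_{v=1}^{∞} c_{v,ε,t}·T_v(x) converges absolutely and (1 − ε·x)^{−t} = c_{0,ε,t}/2 + Σ_{v=1}^{∞} c_{v,ε,t}·T_v(x). -/
/-!
Since `2 x T_m(x) = T_{m+1}(x) + T_{m-1}(x)` for every `m : ℤ`, multiplication by `2x` moves the
index of `T` by one step of a simple walk on `ℤ`, so `(2x)^n` is the sum of `T_v(x)` over the
endpoints `v` of all `n`-step walks. Substituting this into a power series `∑ a_n x^n` with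
`∑ ‖a_n‖ < ∞` gives a double series that converges absolutely for `|x| ≤ 1`, because `|T_v(x)| ≤ 1`
and the walk probabilities add up to `1`. Summing over `n` first gives a series over `v : ℤ`, which
is folded onto `ℕ` using `T_{-v} = T_v`. The theorem is the case of the binomial series.
-/

open Finset Polynomial Polynomial.Chebyshev

namespace ChebyshevSeries

/-- The number of `n`-step walks on `ℤ` with steps `±1` that lead from `0` to `v`: it is zero
unless `|v| ≤ n` and `n - |v|` is even, and then `(n - |v|) / 2` of the steps go away from `v`.
It is the multiplicity of `T_v` in the expansion of `(2X)^n`. -/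
def walkCount (n : ℕ) (v : ℤ) : ℕ :=
  if v.natAbs ≤ n ∧ Even (n - v.natAbs) then n.choose ((n - v.natAbs) / 2) else 0

theorem walkCount_neg (n : ℕ) (v : ℤ) : walkCount n (-v) = walkCount n v := by
  simp only [walkCount, Int.natAbs_neg]

theorem walkCount_sub_two_mul {n k : ℕ} (hk : k ≤ n) :
    walkCount n (n - 2 * k) = n.choose k := by
  rw [walkCount, if_pos ⟨by omega, by rw [Nat.even_iff]; omega⟩]
  rcases le_total (2 * k) n with h | h
  · congr 1
    omega
  · exact Nat.choose_symm_of_eq_add (by omega)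

theorem exists_eq_sub_two_mul_of_walkCount_ne_zero {n : ℕ} {v : ℤ} (hv : walkCount n v ≠ 0) :
    ∃ k ≤ n, v = n - 2 * k := by
  obtain ⟨⟨hle, j, hj⟩, -⟩ := ite_ne_right_iff.1 hv
  exact ⟨((n - v) / 2).toNat, by omega, by omega⟩

section Monomial

variable {R : Type*} [CommRing R]

theorem two_mul_X_pow (n : ℕ) :
    (2 * X : R[X]) ^ n = ∑ ij ∈ antidiagonal n, (n.choose ij.1 : R[X]) * T R (ij.2 - ij.1) := by
  induction n with
  | zero => simp
  | succ n ih =>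
    have two_mul_X_mul_T (m : ℤ) : 2 * X * T R m = T R (m + 1) + T R (m - 1) := by
      rw [T_add_one, sub_add_cancel]
    rw [sum_antidiagonal_choose_succ_mul (fun i j : ℕ ↦ T R (j - i)), pow_succ', ih, mul_sum,
      ← sum_add_distrib]
    refine sum_congr rfl fun ij hij ↦ ?_
    rw [mul_left_comm, two_mul_X_mul_T, mul_add,
      Nat.choose_symm_of_eq_add (mem_antidiagonal.1 hij).symm]
    push_cast
    ring_nf

theorem hasSum_walkCount_mul_eval_T [TopologicalSpace R] (n : ℕ) (x : R) :
    HasSum (fun v : ℤ ↦ (walkCount n v : R) * (T R v).eval x) ((2 * x) ^ n) := by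
  have endpoint_injective : Function.Injective fun k : ℕ ↦ (n : ℤ) - 2 * k := fun i j h ↦ by
    simpa using h
  have hsum : (2 * x) ^ n =
      ∑ v ∈ (range (n + 1)).image fun k : ℕ ↦ (n : ℤ) - 2 * k,
        (walkCount n v : R) * (T R v).eval x := by
    have h := congrArg (eval x) (two_mul_X_pow (R := R) n)
    rw [Nat.sum_antidiagonal_eq_sum_range_succ_mk] at h
    simp only [eval_pow, eval_mul, eval_ofNat, eval_X, eval_finsetSum, eval_natCast] at h
    rw [h, sum_image endpoint_injective.injOn]
    refine sum_congr rfl fun k hk ↦ ?_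
    have hkn : k ≤ n := mem_range_succ_iff.1 hk
    rw [walkCount_sub_two_mul hkn]
    congr 3
    omega
  rw [hsum]
  refine hasSum_sum_of_ne_finset_zero fun v hv ↦ ?_
  suffices walkCount n v = 0 by rw [this, Nat.cast_zero, zero_mul]
  by_contra hne
  obtain ⟨k, hk, rfl⟩ := exists_eq_sub_two_mul_of_walkCount_ne_zero hne
  exact hv (mem_image_of_mem _ (mem_range_succ_iff.2 hk))

end Monomial

/-- The probability that a simple random walk on `ℤ` started at `0` is at `v` after `n` steps.
It is the coefficient of `T_v` in the two-sided Chebyshev expansion of `X^n`. -/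
noncomputable def walkProb (n : ℕ) (v : ℤ) : ℝ :=
  2⁻¹ ^ n * walkCount n v

theorem walkProb_nonneg (n : ℕ) (v : ℤ) : 0 ≤ walkProb n v := by
  unfold walkProb
  positivity

theorem walkProb_neg (n : ℕ) (v : ℤ) : walkProb n (-v) = walkProb n v := by
  simp only [walkProb, walkCount_neg]

theorem hasSum_walkProb_mul_eval_T (n : ℕ) (x : ℝ) :
    HasSum (fun v : ℤ ↦ walkProb n v * (T ℝ v).eval x) (x ^ n) := by
  have h := (hasSum_walkCount_mul_eval_T n x).mul_left (2⁻¹ ^ n)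
  rw [← mul_pow, inv_mul_cancel_left₀ two_ne_zero] at h
  simpa only [walkProb, mul_assoc] using h

theorem hasSum_walkProb (n : ℕ) : HasSum (walkProb n) 1 := by
  simpa only [T_eval_one, mul_one, one_pow] using hasSum_walkProb_mul_eval_T n 1

section PowerSeries

variable {E : Type*} [NormedAddCommGroup E] [NormedSpace ℝ E]

/-- The coefficient of `T_v`, `v : ℤ`, in the two-sided Chebyshev expansion
`∑ a_n x^n = ∑_{v : ℤ} c_v T_v(x)`. As `c_{-v} = c_v`, the coefficient of `T_v` in the usual
one-sided expansion is `2 c_v` for `v ≥ 1` and `c_0` for `v = 0`. -/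
noncomputable def bilateralCoeff (a : ℕ → E) (v : ℤ) : E :=
  ∑' n : ℕ, walkProb n v • a n

theorem bilateralCoeff_neg (a : ℕ → E) (v : ℤ) :
    bilateralCoeff a (-v) = bilateralCoeff a v := by
  simp only [bilateralCoeff, walkProb_neg]

variable [CompleteSpace E] {a : ℕ → E} {x : ℝ}

theorem summable_walkProb_mul_eval_T_smul (ha : Summable fun n ↦ ‖a n‖) (hx : |x| ≤ 1) :
    Summable fun p : ℕ × ℤ ↦ (walkProb p.1 p.2 * (T ℝ p.2).eval x) • a p.1 := by
  have hbound : Summable fun p : ℕ × ℤ ↦ walkProb p.1 p.2 * ‖a p.1‖ := by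
    have row (n : ℕ) : HasSum (fun v : ℤ ↦ walkProb n v * ‖a n‖) ‖a n‖ := by
      simpa only [one_mul] using (hasSum_walkProb n).mul_right ‖a n‖
    rw [summable_prod_of_nonneg fun p ↦ mul_nonneg (walkProb_nonneg _ _) (norm_nonneg _)]
    exact ⟨fun n ↦ (row n).summable, by simpa only [(row _).tsum_eq] using ha⟩
  refine hbound.of_norm_bounded fun ⟨n, v⟩ ↦ ?_
  have hprob := walkProb_nonneg n v
  rw [norm_smul, Real.norm_eq_abs, abs_mul, abs_of_nonneg hprob]
  exact mul_le_mul_of_nonneg_right (mul_le_of_le_one_right hprob (abs_eval_T_real_le_one v hx))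
    (norm_nonneg _)

theorem hasSum_eval_T_smul_bilateralCoeff (ha : Summable fun n ↦ ‖a n‖) (hx : |x| ≤ 1) :
    HasSum (fun v : ℤ ↦ (T ℝ v).eval x • bilateralCoeff a v) (∑' n, x ^ n • a n) := by
  have hsummable := summable_walkProb_mul_eval_T_smul ha hx
  have rows := hsummable.hasSum.prod_fiberwise fun n ↦
    (hasSum_walkProb_mul_eval_T n x).smul_const (a n)
  have columns := hsummable.prod_symm.hasSum.prod_fiberwise fun v ↦
    (hsummable.prod_symm.prod_factor v).hasSum
  rw [rows.tsum_eq, ← (Equiv.prodComm ℤ ℕ).tsum_eq]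
  refine columns.congr_fun fun v ↦ ?_
  simp only [Prod.swap_prod_mk, bilateralCoeff, ← tsum_const_smul'', smul_smul, mul_comm]

theorem hasSum_eval_T_smul_two_smul_bilateralCoeff (ha : Summable fun n ↦ ‖a n‖)
    (hx : |x| ≤ 1) :
    HasSum (fun v : ℕ ↦ (T ℝ v).eval x • (2 : ℝ) • bilateralCoeff a v)
      (∑' n, x ^ n • a n + bilateralCoeff a 0) := by
  have h := (hasSum_eval_T_smul_bilateralCoeff ha hx).nat_add_neg
  simpa only [T_neg, bilateralCoeff_neg, ← two_smul ℝ, smul_comm (2 : ℝ), T_zero, eval_one,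
    one_smul] using h

end PowerSeries

theorem choose_sub_one_add_eq_multichoose (t n : ℕ) :
    (n - 1 + t).choose n = t.multichoose n := by
  cases n with
  | zero => simp
  | succ n => rw [Nat.multichoose_eq, add_tsub_cancel_right, ← add_assoc, add_tsub_cancel_right,
      add_comm n t]

theorem hasSum_multichoose_mul_pow {𝕜 : Type*} [NormedDivisionRing 𝕜] [HasSummableGeomSeries 𝕜]
    (t : ℕ) {r : 𝕜} (hr : ‖r‖ < 1) :
    HasSum (fun n ↦ (t.multichoose n : 𝕜) * r ^ n) ((1 - r) ^ (-(t : ℤ))) := by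
  cases t with
  | zero =>
    convert hasSum_single (f := fun n ↦ (Nat.multichoose 0 n : 𝕜) * r ^ n) 0 fun n hn ↦ ?_
    · simp
    · obtain ⟨m, rfl⟩ := Nat.exists_eq_succ_of_ne_zero hn
      simp
  | succ k =>
    rw [zpow_neg, zpow_natCast, ← one_div]
    refine (hasSum_choose_mul_geometric_of_norm_lt_one k hr).congr_fun fun n ↦ ?_
    rw [Nat.multichoose_eq, Nat.add_right_comm, add_tsub_cancel_right, add_comm k n,
      Nat.choose_symm_add]

theorem chebCoeff_eq_two_mul_bilateralCoeff (ε : ℝ) (t v : ℕ) :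
    chebCoeff ε t v = 2 * bilateralCoeff (fun n ↦ t.multichoose n * ε ^ n) v := by
  rw [chebCoeff, bilateralCoeff]
  congr 2 with n
  simp only [walkProb, walkCount, Int.natAbs_natCast, choose_sub_one_add_eq_multichoose,
    smul_eq_mul]
  split_ifs
  · ring
  · simp

theorem hasSum_chebCoeff_mul_eval_T {ε x : ℝ} (hε : |ε| < 1) (t : ℕ) (hx : |x| ≤ 1) :
    HasSum (fun v : ℕ ↦ chebCoeff ε t v * (T ℝ v).eval x)
      ((1 - ε * x) ^ (-(t : ℤ)) + chebCoeff ε t 0 / 2) := by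
  have hεx : |ε * x| < 1 := by
    rw [abs_mul]
    exact (mul_le_of_le_one_right (abs_nonneg ε) hx).trans_lt hε
  have hvalue : ∑' n, x ^ n • (t.multichoose n * ε ^ n) = (1 - ε * x) ^ (-(t : ℤ)) := by
    rw [← (hasSum_multichoose_mul_pow t hεx).tsum_eq]
    congr 1 with n
    rw [smul_eq_mul, mul_pow]
    ring
  have hsummable := (hasSum_multichoose_mul_pow (r := ε) t hε).summable.norm
  have hconst : chebCoeff ε t 0 / 2 = bilateralCoeff (fun n ↦ t.multichoose n * ε ^ n) 0 := by
    rw [chebCoeff_eq_two_mul_bilateralCoeff, mul_div_cancel_left₀ _ two_ne_zero, Nat.cast_zero]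
  rw [← hvalue, hconst]
  refine (hasSum_eval_T_smul_two_smul_bilateralCoeff hsummable hx).congr_fun fun v ↦ ?_
  rw [chebCoeff_eq_two_mul_bilateralCoeff, smul_eq_mul, smul_eq_mul, mul_comm]

end ChebyshevSeries

theorem stmt_12_general {ε : ℝ} (hε : |ε| < 1) (t : ℕ) {x : ℝ} (hx : |x| ≤ 1) :
    Summable (fun v : ℕ ↦ |chebCoeff ε t (v + 1) * (T ℝ (v + 1)).eval x|) ∧
    (1 - ε * x) ^ (-(t : ℤ)) =
      chebCoeff ε t 0 / 2 + ∑' v : ℕ, chebCoeff ε t (v + 1) * (T ℝ (v + 1)).eval x := by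
  have htail := (hasSum_nat_add_iff' 1).2 (ChebyshevSeries.hasSum_chebCoeff_mul_eval_T hε t hx)
  simp only [sum_range_one, Nat.cast_zero, T_zero, eval_one, mul_one, Nat.cast_succ] at htail
  refine ⟨htail.summable.abs, ?_⟩
  rw [htail.tsum_eq]
  ring

/-- For `ε ∈ (0,1)`, `t ≥ 1` and `x ∈ [-1,1]`, the Chebyshev series
`c_0/2 + ∑_{v ≥ 1} c_v T_v(x)` converges absolutely to `(1 - εx)^{-t}`. -/
theorem stmt_12 (ε : ℝ) (hε : ε ∈ Set.Ioo (0:ℝ) 1) (t : ℕ) (ht : 1 ≤ t)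
    (x : ℝ) (hx : x ∈ Set.Icc (-1:ℝ) 1) :
    Summable (fun v : ℕ =>
      |chebCoeff ε t (v + 1) * (Polynomial.Chebyshev.T ℝ (v + 1)).eval x|) ∧
    (1 - ε * x) ^ (-(t:ℤ)) =
      chebCoeff ε t 0 / 2 +
        ∑' v : ℕ, chebCoeff ε t (v + 1) * (Polynomial.Chebyshev.T ℝ (v + 1)).eval x :=
  stmt_12_general (abs_lt.2 ⟨by linarith [hε.1], hε.2⟩) t (abs_le.2 hx)
end

section
/- For every natural number ℓ, every coefficient (in the standard monomial basis) of the Chebyshev polynomial of the first kind T_ℓ has absolute value at most (1 + √2)^ℓ. -/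
/-!
In the recurrence `T_{n+2} = 2 X T_{n+1} - T_n`, multiplication by `X` only shifts coefficients, so
bounds `A` and `B` for the coefficients of `T_{n+1}` and `T_n` give the bound `2 A + B` for those
of `T_{n+2}`. The powers of `1 + √2`, the positive root of `x ^ 2 = 2 x + 1`, satisfy the
corresponding recurrence with equality.
-/

open Polynomial

theorem one_add_sqrt_two_pow_add_two (n : ℕ) :
    (1 + √2) ^ (n + 2) = 2 * (1 + √2) ^ (n + 1) + (1 + √2) ^ n := by
  have root_eq : (1 + √2) ^ 2 = 2 * (1 + √2) + 1 := by
    linear_combination Real.sq_sqrt (zero_le_two (α := ℝ))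
  linear_combination (1 + √2) ^ n * root_eq

section SeminormedRing

variable {R : Type*} [SeminormedRing R] {p q : R[X]} {A B : ℝ}

theorem norm_coeff_X_mul_le (hp : ∀ i, ‖p.coeff i‖ ≤ A) (i : ℕ) : ‖(X * p).coeff i‖ ≤ A := by
  cases i with
  | zero => simpa only [coeff_X_mul_zero, norm_zero] using (norm_nonneg _).trans (hp 0)
  | succ i => simpa only [coeff_X_mul] using hp i

theorem norm_coeff_two_mul_X_mul_sub_le (hp : ∀ i, ‖p.coeff i‖ ≤ A) (hq : ∀ i, ‖q.coeff i‖ ≤ B)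
    (i : ℕ) : ‖(2 * X * p - q).coeff i‖ ≤ 2 * A + B := by
  have hXp : ‖(X * p).coeff i‖ ≤ A := norm_coeff_X_mul_le hp i
  rw [mul_assoc, two_mul, coeff_sub, coeff_add, two_mul]
  exact norm_sub_le_of_le (norm_add_le_of_le hXp hXp) (hq i)

end SeminormedRing

theorem stmt_13_general {R : Type*} [SeminormedCommRing R] [NormOneClass R] (ℓ i : ℕ) :
    ‖(Chebyshev.T R ℓ).coeff i‖ ≤ (1 + √2) ^ ℓ := by
  induction ℓ using Nat.twoStepInduction generalizing i with
  | zero =>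
    rw [Nat.cast_zero, Chebyshev.T_zero, coeff_one, pow_zero]
    split_ifs <;> simp
  | one =>
    rw [Nat.cast_one, Chebyshev.T_one, coeff_X, pow_one]
    split_ifs
    · simp
    · rw [norm_zero]; positivity
  | more n bound_n bound_succ =>
    rw [Nat.cast_succ] at bound_succ
    rw [Nat.cast_add, Nat.cast_two, Chebyshev.T_add_two, one_add_sqrt_two_pow_add_two]
    exact norm_coeff_two_mul_X_mul_sub_le bound_succ bound_n i

/-- Every coefficient of the Chebyshev polynomial of the first kind `T_ℓ`
has absolute value at most `(1 + √2)^ℓ`. -/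
theorem stmt_13 (ℓ : ℕ) (i : ℕ) :
    |(Polynomial.Chebyshev.T ℝ ℓ).coeff i| ≤ (1 + Real.sqrt 2) ^ ℓ :=
  stmt_13_general (R := ℝ) ℓ i
end

section
/- There exists an absolute constant C > 0 such that for every integer t ≥ 2, every real ε ∈ (0, 1/10], and every integer d ≥ 10·ε·t, every coefficient (in the standard monomial basis) of the polynomial P(X) := c_{0,ε,t}/2 + Σ_{v=1}^{d} c_{v,ε,t}·T_v(X) has absolute value at most 2^{C·(d+1)}. -/
/-!
By the negative binomial series and `C(n, k) ≤ 2 ^ n`, every `|c_{v,ε,t}|` is at most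
`2 (1 - |ε|)⁻ᵗ ≤ 2 exp (t |ε| / (1 - |ε|))`, which is exponential in `d` as soon as
`|ε| t ≤ (1 - |ε|) d`. The three-term recurrence bounds the coefficients of `T_v` by `3 ^ v`,
so adding up the `d + 1` terms costs only another factor `4 ^ d`.
-/

open Polynomial Finset

section ChebyshevCoefficients

variable {R : Type*} [CommRing R] [LinearOrder R] [IsStrictOrderedRing R]

theorem abs_coeff_chebyshev_T_le (n i : ℕ) : |(Chebyshev.T R n).coeff i| ≤ 3 ^ n := by
  induction n using Nat.twoStepInduction generalizing i with
  | zero =>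
    simp only [Nat.cast_zero, Chebyshev.T_zero, coeff_one]
    split_ifs <;> simp
  | one =>
    simp only [Nat.cast_one, Chebyshev.T_one, coeff_X]
    split_ifs <;> simp
  | more n ihn ihn_succ =>
    have shifted : |(X * Chebyshev.T R (n + 1 : ℕ)).coeff i| ≤ 3 ^ (n + 1) := by
      cases i with
      | zero => simp
      | succ i => simpa only [coeff_X_mul] using ihn_succ i
    have recurrence : (Chebyshev.T R (n + 2 : ℕ)).coeff i =
        2 * (X * Chebyshev.T R (n + 1 : ℕ)).coeff i - (Chebyshev.T R n).coeff i := by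
      push_cast
      rw [Chebyshev.T_add_two, coeff_sub, mul_assoc, coeff_ofNat_mul]
    calc |(Chebyshev.T R (n + 2 : ℕ)).coeff i|
        ≤ 2 * |(X * Chebyshev.T R (n + 1 : ℕ)).coeff i| + |(Chebyshev.T R n).coeff i| := by
          rw [recurrence]
          exact (abs_sub _ _).trans_eq (by rw [abs_mul, Nat.abs_ofNat])
      _ ≤ 2 * 3 ^ (n + 1) + 3 ^ n := by gcongr; exact ihn i
      _ ≤ 2 * 3 ^ (n + 1) + 3 ^ (n + 1) := by gcongr <;> simp
      _ = 3 ^ (n + 2) := by ring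

theorem abs_coeff_C_add_sum_C_mul_chebyshev_T_le {a₀ M : R} {a : ℕ → R} {d : ℕ}
    (ha₀ : |a₀| ≤ M) (ha : ∀ v ∈ Icc 1 d, |a v| ≤ M) (i : ℕ) :
    |(C a₀ + ∑ v ∈ Icc 1 d, C (a v) * Chebyshev.T R v).coeff i| ≤ M * 4 ^ d := by
  have hM : 0 ≤ M := (abs_nonneg a₀).trans ha₀
  induction d with
  | zero =>
    simp only [Icc_eq_empty_of_lt zero_lt_one, sum_empty, add_zero, pow_zero, mul_one, coeff_C]
    split_ifs
    · exact ha₀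
    · simpa only [abs_zero] using hM
  | succ d ih =>
    have ih := ih fun v hv => ha v (Icc_subset_Icc_right d.le_succ hv)
    have last : |(C (a (d + 1)) * Chebyshev.T R (d + 1 : ℕ)).coeff i| ≤ M * 3 ^ (d + 1) := by
      rw [coeff_C_mul, abs_mul]
      exact mul_le_mul (ha _ (by simp)) (abs_coeff_chebyshev_T_le _ i) (abs_nonneg _) hM
    rw [sum_Icc_succ_top (Nat.le_add_left 1 d), ← add_assoc, coeff_add]
    calc _ ≤ M * 4 ^ d + M * 3 ^ (d + 1) := (abs_add_le _ _).trans (add_le_add ih last)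
      _ = M * 4 ^ d + M * (3 * 3 ^ d) := by rw [pow_succ']
      _ ≤ M * 4 ^ d + M * (3 * 4 ^ d) := by gcongr; norm_num
      _ = M * 4 ^ (d + 1) := by ring

end ChebyshevCoefficients

theorem hasSum_choose_pred_add_mul_pow {𝕜 : Type*} [NormedDivisionRing 𝕜]
    [HasSummableGeomSeries 𝕜] (t : ℕ) {r : 𝕜} (hr : ‖r‖ < 1) :
    HasSum (fun n : ℕ => ((n - 1 + t).choose n : 𝕜) * r ^ n) (1 / (1 - r) ^ t) := by
  cases t with
  | zero =>
    convert hasSum_ite_eq 0 (1 : 𝕜) using 2 with n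
    · cases n <;> simp
    · simp
  | succ k =>
    convert hasSum_choose_mul_geometric_of_norm_lt_one k hr using 4 with n
    cases n with
    | zero => simp
    | succ n => rw [Nat.add_sub_cancel, ← Nat.choose_symm_add, add_right_comm, add_assoc]

theorem abs_chebCoeff_le {ε : ℝ} (hε : |ε| < 1) (t v : ℕ) :
    |chebCoeff ε t v| ≤ 2 * (1 / (1 - |ε|) ^ t) := by
  rw [chebCoeff, abs_mul, Nat.abs_ofNat]
  gcongr
  rw [← Real.norm_eq_abs]
  refine tsum_of_norm_bounded
    (hasSum_choose_pred_add_mul_pow t (by rwa [Real.norm_eq_abs, abs_abs])) fun n => ?_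
  split_ifs
  · have half_pow_mul_choose_le : (2 : ℝ)⁻¹ ^ n * n.choose ((n - v) / 2) ≤ 1 := by
      rw [inv_pow, inv_mul_le_one₀ (by positivity)]
      exact_mod_cast Nat.choose_le_two_pow n _
    calc _ = (n - 1 + t).choose n * |ε| ^ n * ((2 : ℝ)⁻¹ ^ n * n.choose ((n - v) / 2)) := by
          simp only [norm_mul, norm_pow, norm_inv, Real.norm_ofNat, Real.norm_eq_abs,
            Nat.abs_cast]
          ring
      _ ≤ (n - 1 + t).choose n * |ε| ^ n :=
          mul_le_of_le_one_right (by positivity) half_pow_mul_choose_le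
  · rw [norm_zero]
    positivity

theorem one_div_one_sub_pow_le_exp {x : ℝ} (hx : x < 1) (n : ℕ) :
    1 / (1 - x) ^ n ≤ Real.exp (n * (x / (1 - x))) := by
  have h : 0 < 1 - x := sub_pos.mpr hx
  have base : 1 / (1 - x) ≤ Real.exp (x / (1 - x)) := by
    calc 1 / (1 - x) = x / (1 - x) + 1 := by field_simp; ring
      _ ≤ Real.exp (x / (1 - x)) := Real.add_one_le_exp _
  rw [← one_div_pow, Real.exp_nat_mul]
  gcongr

theorem abs_chebCoeff_le_two_mul_four_pow {ε : ℝ} (hε : |ε| < 1) {t d : ℕ}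
    (hd : |ε| * t ≤ (1 - |ε|) * d) (v : ℕ) : |chebCoeff ε t v| ≤ 2 * 4 ^ d := by
  have exponent_le : (t : ℝ) * (|ε| / (1 - |ε|)) ≤ d := by
    rw [mul_div_assoc', div_le_iff₀ (sub_pos.mpr hε)]
    linarith
  calc |chebCoeff ε t v| ≤ 2 * (1 / (1 - |ε|) ^ t) := abs_chebCoeff_le hε t v
    _ ≤ 2 * Real.exp (t * (|ε| / (1 - |ε|))) := by
        gcongr
        exact one_div_one_sub_pow_le_exp hε t
    _ ≤ 2 * Real.exp d := by gcongr
    _ = 2 * Real.exp 1 ^ d := by rw [Real.exp_one_pow]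
    _ ≤ 2 * 4 ^ d := by
        gcongr
        linarith [Real.exp_one_lt_three]

theorem stmt_15_general {ε : ℝ} (hε : |ε| < 1) {t d : ℕ}
    (hd : |ε| * t ≤ (1 - |ε|) * d) (i : ℕ) :
    |(C (chebCoeff ε t 0 / 2) +
        ∑ v ∈ Icc 1 d, C (chebCoeff ε t v) * Chebyshev.T ℝ v).coeff i| ≤ 2 ^ (4 * (d + 1)) := by
  have hc := abs_chebCoeff_le_two_mul_four_pow hε hd
  have hc₀ : |chebCoeff ε t 0 / 2| ≤ 2 * 4 ^ d := by
    rw [abs_div, Nat.abs_ofNat]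
    exact (half_le_self (abs_nonneg _)).trans (hc 0)
  calc _ ≤ 2 * 4 ^ d * 4 ^ d :=
        abs_coeff_C_add_sum_C_mul_chebyshev_T_le hc₀ (fun v _ => hc v) i
    _ = 2 * (2 ^ 4) ^ d := by rw [mul_assoc, ← mul_pow]; norm_num
    _ ≤ 2 ^ 4 * (2 ^ 4) ^ d := by gcongr; norm_num
    _ = 2 ^ (4 * (d + 1)) := by rw [pow_mul, pow_succ' _ d]

/-- Every coefficient of the truncated Chebyshev expansion
`P(X) = c_0/2 + ∑_{v=1}^d c_v T_v(X)` of `(1 - εX)^{-t}` has absolute value at most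
`2^{C·(d+1)}`. -/
theorem stmt_15 :
    ∃ C : ℝ, 0 < C ∧
    ∀ t : ℕ, 2 ≤ t → ∀ ε : ℝ, ε ∈ Set.Ioc (0:ℝ) (1/10) →
    ∀ d : ℕ, 10 * ε * t ≤ (d : ℝ) → ∀ i : ℕ,
      |(Polynomial.C (chebCoeff ε t 0 / 2) +
          ∑ v ∈ Finset.Icc 1 d,
            Polynomial.C (chebCoeff ε t v) * Polynomial.Chebyshev.T ℝ v).coeff i|
        ≤ (2:ℝ) ^ (C * ((d : ℝ) + 1)) := by
  refine ⟨4, by norm_num, fun t _ ε ⟨hε₀, hε⟩ d hd i => ?_⟩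
  have habs : |ε| = ε := abs_of_pos hε₀
  have hd' : |ε| * t ≤ (1 - |ε|) * d := by
    rw [habs]
    nlinarith [(Nat.cast_nonneg d : (0 : ℝ) ≤ d)]
  exact_mod_cast stmt_15_general (by linarith) hd' i
end

section
/- Let ε ∈ (0, 1/10] be real, let t ≥ 1 be an integer, and let v ≥ 0 be real, and let F and n₀ be as defined in the context. Then: (1) F(n) ≤ F(n₀) for every real n > v; and (2) F(n₀ + z) ≤ F(n₀) − (log 2 / 4)·z for every real z ≥ 2·n₀. -/
/-- The function `F(n) = -n log(1/ε) - n log 2 + (n+t) log(n+t) - t log t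
- ((n-v)/2) log((n-v)/2) - ((n+v)/2) log((n+v)/2)`. -/
noncomputable def Ffun (ε : ℝ) (t : ℕ) (v : ℝ) (n : ℝ) : ℝ :=
  -n * Real.log (1 / ε) - n * Real.log 2 + (n + t) * Real.log (n + t)
    - t * Real.log t - (n - v) / 2 * Real.log ((n - v) / 2)
    - (n + v) / 2 * Real.log ((n + v) / 2)

/-- The maximizer `n₀ = (tε² + √(ε²t² + v²(1-ε²)))/(1-ε²)` of `F`. -/
noncomputable def nZero (ε : ℝ) (t : ℕ) (v : ℝ) : ℝ :=
  (t * ε ^ 2 + Real.sqrt (ε ^ 2 * t ^ 2 + v ^ 2 * (1 - ε ^ 2))) / (1 - ε ^ 2)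

/-!
On `(v, ∞)` the function `F` is concave, with `F'(n) = log (ε(n + t) / √(n² - v²))`, so it lies
below each of its tangent lines. The point `n₀` solves `ε(n + t) = √(n² - v²)`, so the tangent there
is horizontal and `n₀` is a maximizer. At `2n₀` the slope is at most `log ((1 + ε) / 2)`, and the
tangent there gives `F(n₀ + z) ≤ F(2n₀) - log (2 / (1 + ε)) (z - n₀)`, where `z - n₀ ≥ z / 2`.
-/

open Real Set

theorem le_tangentLine_of_concaveOn {s : Set ℝ} {f : ℝ → ℝ} {f' x y : ℝ} (hf : ConcaveOn ℝ s f)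
    (hx : x ∈ s) (hy : y ∈ s) (hf' : HasDerivAt f f' x) : f y ≤ f x + f' * (y - x) := by
  rcases lt_trichotomy x y with hxy | rfl | hyx
  · have h := hf.slope_le_of_hasDerivAt hx hy hxy hf'
    rw [slope_def_field, div_le_iff₀ (sub_pos.2 hxy)] at h
    linarith
  · simp
  · have h := hf.le_slope_of_hasDerivAt hy hx hyx hf'
    rw [slope_def_field, le_div_iff₀ (sub_pos.2 hyx)] at h
    linarith

theorem log_two_div_two_le_log_two_div {x : ℝ} (hx : 0 < x) (hx' : x ≤ √2) :
    log 2 / 2 ≤ log (2 / x) := by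
  have h : log x ≤ log 2 / 2 := log_sqrt zero_le_two ▸ log_le_log hx hx'
  rw [log_div two_ne_zero hx.ne']
  linarith

theorem add_mul_div_sqrt_le {ε a m : ℝ} (hε : 0 ≤ ε) (hε' : ε ≤ 1) (ha : 0 ≤ a)
    (ham : a ≤ m) :
    (a + ε * m) / √(a ^ 2 + 3 * m ^ 2) ≤ (1 + ε) / 2 := by
  have hm : 0 ≤ m := ha.trans ham
  refine div_le_of_le_mul₀ (sqrt_nonneg _) (by positivity) ?_
  refine (abs_le_of_sq_le_sq' ?_ (by positivity)).2
  rw [mul_pow, sq_sqrt (by positivity)]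
  have ha_coeff : 0 ≤ 4 - (1 + ε) ^ 2 := by nlinarith
  have hm_coeff : 0 ≤ 3 * (1 + ε) ^ 2 - 4 * ε ^ 2 := by nlinarith
  -- The two sides agree at `a = m`, so `m - a` divides the difference of their squares.
  have hfactor : 0 ≤ (m - a) * ((4 - (1 + ε) ^ 2) * a + (3 * (1 + ε) ^ 2 - 4 * ε ^ 2) * m) :=
    mul_nonneg (sub_nonneg.2 ham) (by positivity)
  linarith

section Ffun

variable {ε v n : ℝ} {t : ℕ}

theorem hasDerivAt_Ffun (hv : 0 ≤ v) (hn : v < n) :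
    HasDerivAt (Ffun ε t v) (log ε + log (n + t) - (log (n - v) + log (n + v)) / 2) n := by
  have hn₀ : 0 < n := hv.trans_lt hn
  have hsub : n - v ≠ 0 := (sub_pos.2 hn).ne'
  have hadd : n + v ≠ 0 := by positivity
  have hid : HasDerivAt (fun x : ℝ => x) 1 n := hasDerivAt_id n
  have hlinear := (hid.neg.mul_const (log (1 / ε))).sub (hid.mul_const (log 2))
  have hentropy_t := (hasDerivAt_mul_log (by positivity : n + t ≠ 0)).comp n (hid.add_const (t : ℝ))
  have hentropy_sub := (hasDerivAt_mul_log (div_ne_zero hsub two_ne_zero)).comp n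
    ((hid.sub_const v).div_const 2)
  have hentropy_add := (hasDerivAt_mul_log (div_ne_zero hadd two_ne_zero)).comp n
    ((hid.add_const v).div_const 2)
  refine ((((hlinear.add hentropy_t).sub_const (t * log t)).sub hentropy_sub).sub
    hentropy_add).congr_deriv ?_
  rw [one_div, log_inv, log_div hsub two_ne_zero, log_div hadd two_ne_zero]
  ring

theorem concaveOn_Ffun (hv : 0 ≤ v) : ConcaveOn ℝ (Ioi v) (Ffun ε t v) := by
  have hF'' (n : ℝ) (hn : v < n) :
      HasDerivAt (fun n => log ε + log (n + t) - (log (n - v) + log (n + v)) / 2)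
        (1 / (n + t) - (1 / (n - v) + 1 / (n + v)) / 2) n := by
    have hn₀ : 0 < n := hv.trans_lt hn
    have hid : HasDerivAt (fun x : ℝ => x) 1 n := hasDerivAt_id n
    exact (((hid.add_const (t : ℝ)).log (by positivity)).const_add (log ε)).sub
      ((((hid.sub_const v).log (sub_pos.2 hn).ne').add
        ((hid.add_const v).log (by positivity))).div_const 2)
  have hF''_nonpos (n : ℝ) (hn : v < n) :
      1 / (n + t) - (1 / (n - v) + 1 / (n + v)) / 2 ≤ 0 := by
    have hn₀ : 0 < n := hv.trans_lt hn
    have hsub : 0 < n - v := sub_pos.2 hn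
    have hmean : 1 / n ≤ (1 / (n - v) + 1 / (n + v)) / 2 := by
      rw [div_add_div _ _ hsub.ne' (by positivity), div_div, div_le_div_iff₀ hn₀ (by positivity)]
      nlinarith [sq_nonneg v]
    have hshift : 1 / (n + t) ≤ 1 / n := one_div_le_one_div_of_le hn₀ (by simp)
    linarith
  refine concaveOn_of_hasDerivWithinAt2_nonpos (convex_Ioi v)
    (fun n hn => (hasDerivAt_Ffun hv hn).continuousAt.continuousWithinAt) ?_ ?_ ?_
    (f' := fun n => log ε + log (n + t) - (log (n - v) + log (n + v)) / 2)
    (f'' := fun n => 1 / (n + t) - (1 / (n - v) + 1 / (n + v)) / 2) <;>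
    rw [interior_Ioi]
  · exact fun n hn => (hasDerivAt_Ffun hv hn).hasDerivWithinAt
  · exact fun n hn => (hF'' n hn).hasDerivWithinAt
  · exact hF''_nonpos

theorem hasDerivAt_Ffun_log_div_sqrt (hε : 0 < ε) (hv : 0 ≤ v) (hn : v < n) :
    HasDerivAt (Ffun ε t v) (log (ε * (n + t) / √(n ^ 2 - v ^ 2))) n := by
  have hn₀ : 0 < n := hv.trans_lt hn
  have hsub : 0 < n - v := sub_pos.2 hn
  have hadd : 0 < n + v := by positivity
  have hfactor : n ^ 2 - v ^ 2 = (n - v) * (n + v) := by ring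
  refine (hasDerivAt_Ffun hv hn).congr_deriv ?_
  rw [hfactor, log_div (by positivity) (by positivity), log_mul hε.ne' (by positivity),
    log_sqrt (by positivity), log_mul hsub.ne' hadd.ne']

theorem nZero_pos (hε : 0 < ε) (hε' : ε < 1) (ht : 0 < t) : 0 < nZero ε t v := by
  have hden : 0 < 1 - ε ^ 2 := sub_pos.2 (pow_lt_one₀ hε.le hε' two_ne_zero)
  unfold nZero
  positivity

theorem mul_nZero_add_sq (hε : ε ^ 2 < 1) :
    (ε * (nZero ε t v + t)) ^ 2 = nZero ε t v ^ 2 - v ^ 2 := by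
  have hden : 0 < 1 - ε ^ 2 := sub_pos.2 hε
  have hsqrt : √(ε ^ 2 * t ^ 2 + v ^ 2 * (1 - ε ^ 2)) = (1 - ε ^ 2) * nZero ε t v - t * ε ^ 2 := by
    unfold nZero
    field_simp
    ring
  have hsq := sq_sqrt (by positivity : 0 ≤ ε ^ 2 * (t : ℝ) ^ 2 + v ^ 2 * (1 - ε ^ 2))
  rw [hsqrt] at hsq
  refine mul_left_cancel₀ hden.ne' ?_
  linear_combination -hsq

theorem lt_nZero (hε : 0 < ε) (hε' : ε < 1) (ht : 0 < t) : v < nZero ε t v := by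
  have hpos : 0 < nZero ε t v := nZero_pos hε hε' ht
  have hsq := mul_nZero_add_sq (t := t) (v := v) (pow_lt_one₀ hε.le hε' two_ne_zero)
  have hsq_pos : 0 < (ε * (nZero ε t v + t)) ^ 2 := by positivity
  exact lt_of_pow_lt_pow_left₀ 2 hpos.le (by linarith)

theorem hasDerivAt_Ffun_nZero (hε : 0 < ε) (hε' : ε < 1) (ht : 0 < t) (hv : 0 ≤ v) :
    HasDerivAt (Ffun ε t v) 0 (nZero ε t v) := by
  have hpos : 0 < nZero ε t v := nZero_pos hε hε' ht
  refine (hasDerivAt_Ffun_log_div_sqrt hε hv (lt_nZero hε hε' ht)).congr_deriv ?_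
  rw [← mul_nZero_add_sq (pow_lt_one₀ hε.le hε' two_ne_zero), sqrt_sq (by positivity),
    div_self (by positivity), log_one]

theorem Ffun_le_Ffun_nZero (hε : 0 < ε) (hε' : ε < 1) (ht : 0 < t) (hv : 0 ≤ v) (hn : v < n) :
    Ffun ε t v n ≤ Ffun ε t v (nZero ε t v) := by
  simpa only [zero_mul, add_zero] using le_tangentLine_of_concaveOn (concaveOn_Ffun hv)
    (lt_nZero hε hε' ht) hn (hasDerivAt_Ffun_nZero hε hε' ht hv)

theorem log_div_sqrt_two_mul_nZero_le (hε : 0 < ε) (hε' : ε < 1) (ht : 0 < t) :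
    log (ε * (2 * nZero ε t v + t) / √((2 * nZero ε t v) ^ 2 - v ^ 2)) ≤ log ((1 + ε) / 2) := by
  have hsq := mul_nZero_add_sq (t := t) (v := v) (pow_lt_one₀ hε.le hε' two_ne_zero)
  have hm : 0 < nZero ε t v := nZero_pos hε hε' ht
  generalize nZero ε t v = m at hsq hm ⊢
  have ham : ε * (m + t) ≤ m := (abs_le_of_sq_le_sq' (by linarith [sq_nonneg v]) hm.le).2
  have hnum : ε * (2 * m + t) = ε * (m + t) + ε * m := by ring
  have hden : (2 * m) ^ 2 - v ^ 2 = (ε * (m + t)) ^ 2 + 3 * m ^ 2 := by linear_combination -hsq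
  rw [hnum, hden]
  exact log_le_log (by positivity) (add_mul_div_sqrt_le hε.le hε'.le (by positivity) ham)

theorem Ffun_nZero_add_le (hε : 0 < ε) (hε' : ε < 1) (ht : 0 < t) (hv : 0 ≤ v) {z : ℝ}
    (hz : 2 * nZero ε t v ≤ z) :
    Ffun ε t v (nZero ε t v + z) ≤ Ffun ε t v (nZero ε t v) - log (2 / (1 + ε)) / 2 * z := by
  have hlt : v < nZero ε t v := lt_nZero hε hε' ht
  have hmax : Ffun ε t v (2 * nZero ε t v) ≤ Ffun ε t v (nZero ε t v) :=
    Ffun_le_Ffun_nZero hε hε' ht hv (by linarith)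
  have hslope := log_div_sqrt_two_mul_nZero_le (v := v) hε hε' ht
  have hrate : 0 ≤ log (2 / (1 + ε)) := log_nonneg ((one_le_div (by linarith)).2 (by linarith))
  rw [← inv_div 2, log_inv] at hslope
  generalize nZero ε t v = m at *
  calc Ffun ε t v (m + z)
      ≤ Ffun ε t v (2 * m) + log (ε * (2 * m + t) / √((2 * m) ^ 2 - v ^ 2)) * (m + z - 2 * m) :=
        le_tangentLine_of_concaveOn (concaveOn_Ffun hv) (mem_Ioi.2 (by linarith))
          (mem_Ioi.2 (by linarith)) (hasDerivAt_Ffun_log_div_sqrt hε hv (by linarith))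
    _ ≤ Ffun ε t v m + -log (2 / (1 + ε)) * (m + z - 2 * m) := by
        gcongr
        linarith
    _ ≤ Ffun ε t v m - log (2 / (1 + ε)) / 2 * z := by
        linarith [mul_nonneg hrate (by linarith : 0 ≤ z - 2 * m)]

end Ffun

theorem stmt_16_general (ε : ℝ) (hε : ε ∈ Ioo (0 : ℝ) 1) (t : ℕ) (ht : 1 ≤ t)
    (v : ℝ) (hv : 0 ≤ v) :
    (∀ n : ℝ, v < n → Ffun ε t v n ≤ Ffun ε t v (nZero ε t v)) ∧
    (∀ z : ℝ, 2 * nZero ε t v ≤ z →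
      Ffun ε t v (nZero ε t v + z) ≤ Ffun ε t v (nZero ε t v) - log (2 / (1 + ε)) / 2 * z) :=
  ⟨fun _ hn => Ffun_le_Ffun_nZero hε.1 hε.2 ht hv hn,
    fun _ hz => Ffun_nZero_add_le hε.1 hε.2 ht hv hz⟩

/-- `F` is maximized at `n₀`, and for `z ≥ 2n₀` it decays at least
linearly: `F(n₀ + z) ≤ F(n₀) − (log 2/4)·z`. -/
theorem stmt_16 (ε : ℝ) (hε : ε ∈ Set.Ioc (0:ℝ) (1/10)) (t : ℕ) (ht : 1 ≤ t)
    (v : ℝ) (hv : 0 ≤ v) :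
    (∀ n : ℝ, v < n → Ffun ε t v n ≤ Ffun ε t v (nZero ε t v)) ∧
    (∀ z : ℝ, 2 * nZero ε t v ≤ z →
      Ffun ε t v (nZero ε t v + z) ≤ Ffun ε t v (nZero ε t v) - Real.log 2 / 4 * z) := by
  have hε₁ : ε < 1 := by linarith [hε.2]
  have hsqrt : 1 + ε ≤ √2 := le_sqrt_of_sq_le (by nlinarith [hε.1, hε.2])
  have hrate := log_two_div_two_le_log_two_div (by linarith [hε.1]) hsqrt
  refine (stmt_16_general ε ⟨hε.1, hε₁⟩ t ht v hv).imp_right fun hdecay z hz => ?_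
  have hz₀ : 0 ≤ z := by linarith [nZero_pos (v := v) hε.1 hε₁ ht]
  linarith [hdecay z hz, mul_le_mul_of_nonneg_right hrate hz₀]
end

section
/- There exists an absolute constant ε₀ ∈ (0,1) such that for every real ε ∈ (0, ε₀], every integer t ≥ 1, and every real v with 0 ≤ v ≤ 10·ε·t, one has F(n₀) ≤ 100·ε·t, where F and n₀ are as defined in the context. -/
/-!
For `n > |v|`, the quantity `F(n) + t log (1 - ε)` equals `-(n + t)` times the relative entropy of
the distribution `((n - v)/2, (n + v)/2, t) / (n + t)` with respect to `(ε/2, ε/2, 1 - ε)`.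
By Gibbs' inequality `F(n) ≤ t log (1 / (1 - ε)) ≤ t ε / (1 - ε)`, and `n₀ > |v|`.
-/

open Real

theorem mul_log_div_le_sub {x y : ℝ} (hx : 0 ≤ x) (hy : 0 < y) : x * log (y / x) ≤ y - x := by
  rcases hx.eq_or_lt with rfl | hx
  · simpa using hy.le
  · calc x * log (y / x) ≤ x * (y / x - 1) := by
          gcongr
          exact log_le_sub_one_of_pos (by positivity)
      _ = y - x := by field_simp

theorem neg_log_one_sub_le {x : ℝ} (hx : x < 1) : -log (1 - x) ≤ x / (1 - x) := by
  have hx' : 0 < 1 - x := sub_pos.2 hx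
  calc -log (1 - x) ≤ (1 - x)⁻¹ - 1 := by linarith [one_sub_inv_le_log_of_pos hx']
    _ = x / (1 - x) := by field_simp; ring

section

variable {ε v n : ℝ} {t : ℕ}

theorem Ffun_add_mul_log_one_sub (hε₀ : 0 < ε) (hε₁ : ε < 1) (ht : 0 < t) (hn : |v| < n) :
    Ffun ε t v n + t * log (1 - ε) =
      (n - v) / 2 * log (ε / 2 * (n + t) / ((n - v) / 2)) +
        (n + v) / 2 * log (ε / 2 * (n + t) / ((n + v) / 2)) +
        t * log ((1 - ε) * (n + t) / t) := by
  obtain ⟨hvn, hvn'⟩ := abs_lt.1 hn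
  have hn₀ : 0 < n := (abs_nonneg v).trans_lt hn
  have ht₀ : (0 : ℝ) < t := Nat.cast_pos.2 ht
  have hnt : n + t ≠ 0 := by positivity
  have hsub : (n - v) / 2 ≠ 0 := by linarith
  have hadd : (n + v) / 2 ≠ 0 := by linarith
  have hε' : 1 - ε ≠ 0 := by linarith
  rw [Ffun, one_div, log_inv, log_div (by positivity) hsub, log_div (by positivity) hadd,
    log_div (by positivity) ht₀.ne', log_mul (by positivity) hnt, log_mul hε' hnt,
    log_div hε₀.ne' two_ne_zero]
  ring

theorem Ffun_le_neg_mul_log_one_sub (hε₀ : 0 < ε) (hε₁ : ε < 1) (ht : 0 < t) (hn : |v| < n) :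
    Ffun ε t v n ≤ -(t * log (1 - ε)) := by
  obtain ⟨hvn, hvn'⟩ := abs_lt.1 hn
  have hn₀ : 0 < n := (abs_nonneg v).trans_lt hn
  have hsub : (n - v) / 2 * log (ε / 2 * (n + t) / ((n - v) / 2)) ≤
      ε / 2 * (n + t) - (n - v) / 2 := mul_log_div_le_sub (by linarith) (by positivity)
  have hadd : (n + v) / 2 * log (ε / 2 * (n + t) / ((n + v) / 2)) ≤
      ε / 2 * (n + t) - (n + v) / 2 := mul_log_div_le_sub (by linarith) (by positivity)
  have ht' : t * log ((1 - ε) * (n + t) / t) ≤ (1 - ε) * (n + t) - t :=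
    mul_log_div_le_sub t.cast_nonneg (mul_pos (sub_pos.2 hε₁) (by positivity))
  linarith [Ffun_add_mul_log_one_sub hε₀ hε₁ ht hn]

theorem abs_lt_nZero (hε₀ : 0 < ε) (hε₁ : ε < 1) (ht : 0 < t) : |v| < nZero ε t v := by
  have hden : 0 < 1 - ε ^ 2 := sub_pos.2 (pow_lt_one₀ hε₀.le hε₁ two_ne_zero)
  have hsq : (v * (1 - ε ^ 2)) ^ 2 ≤ ε ^ 2 * t ^ 2 + v ^ 2 * (1 - ε ^ 2) :=
    calc (v * (1 - ε ^ 2)) ^ 2 = v ^ 2 * (1 - ε ^ 2) * (1 - ε ^ 2) := by ring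
      _ ≤ v ^ 2 * (1 - ε ^ 2) := mul_le_of_le_one_right (by positivity) (by simp [sq_nonneg])
      _ ≤ _ := le_add_of_nonneg_left (by positivity)
  rw [nZero, lt_div_iff₀ hden]
  calc |v| * (1 - ε ^ 2) = |v * (1 - ε ^ 2)| := by rw [abs_mul, abs_of_pos hden]
    _ ≤ √(ε ^ 2 * t ^ 2 + v ^ 2 * (1 - ε ^ 2)) := abs_le_sqrt hsq
    _ < _ := lt_add_of_pos_left _ (by positivity)

theorem stmt_18_general (hε₀ : 0 < ε) (hε₁ : ε < 1) (ht : 0 < t) :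
    Ffun ε t v (nZero ε t v) ≤ t * (ε / (1 - ε)) :=
  calc Ffun ε t v (nZero ε t v) ≤ -(t * log (1 - ε)) :=
        Ffun_le_neg_mul_log_one_sub hε₀ hε₁ ht (abs_lt_nZero hε₀ hε₁ ht)
    _ = t * -log (1 - ε) := (mul_neg ..).symm
    _ ≤ t * (ε / (1 - ε)) := by gcongr; exact neg_log_one_sub_le hε₁

end

/-- For `ε` at most a small absolute constant, `t ≥ 1` and
`0 ≤ v ≤ 10·ε·t`, one has `F(n₀) ≤ 100·ε·t`. -/
theorem stmt_18 :
    ∃ ε₀ ∈ Set.Ioo (0:ℝ) 1, ∀ ε : ℝ, ε ∈ Set.Ioc (0:ℝ) ε₀ → ∀ t : ℕ, 1 ≤ t →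
      ∀ v : ℝ, 0 ≤ v → v ≤ 10 * ε * t → Ffun ε t v (nZero ε t v) ≤ 100 * ε * t := by
  refine ⟨99 / 100, by norm_num, fun ε ⟨hε₀, hε⟩ t ht v _ _ ↦
    (stmt_18_general hε₀ (by linarith) ht).trans ?_⟩
  calc t * (ε / (1 - ε)) ≤ t * (ε / (1 / 100)) := by gcongr; linarith
    _ = 100 * ε * t := by ring
end
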